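/- arXiv:1601.05515 — 2 statements merged into one kernel-verified Lean document; each statement's English description precedes it below -/
import Mathlib

section
/- For every ε > 0 there is a constant C(ε) > 0 with the following property: if K ≥ 10, α, β are real numbers with 2K^{−1/2} ≤ |α| ≤ K^{1/2}, and 0 < δ < 1/2, then the number of integers k with K < k ≤ 2K and ‖β + α√k‖ < δ is at most C(ε)·(Kδ + K^{1/2+ε}). -/
/-- Distance from a real number to the nearest integer. -/
noncomputable def distNearestInt (x : ℝ) : ℝ := |x - round x|

/-!
Let `r` be the nearest integer to `β + α√k`. If `‖β + α√k‖ < δ`, then `(r - β) ^ 2 / α ^ 2` lies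
within `O(δ√K / α)` of the integer `k`. If `α` is at most a constant times `δ√K`, counting the `k`
that share an `r` already gives `O(Kδ)`. Otherwise `k ↦ r` is injective, and it remains to count
the values of a quadratic polynomial with leading coefficient `1 / α ^ 2` that lie near an integer,
over an interval of `O(α√K)` values of `r`. The Fejér kernel of order `H ≍ α / (δ√K)` bounds their
number by an average of quadratic exponential sums with frequencies `h ≤ H`. By Cauchy-Schwarz a
bound on average over `h` suffices: Weyl differencing turns the sums into geometric ones with
frequencies `hd / (α ^ 2 / 2)`, and each product `hd` occurs `O(K ^ ε)` times by the divisor bound.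
-/

open Finset
open scoped FourierTransform

section DivisorBound

lemma add_one_le_mul_rpow_pow {ε x : ℝ} (hε : 0 < ε) (hx : 2 ≤ x) (a : ℕ) :
    (a : ℝ) + 1 ≤ (1 + 1 / (ε * Real.log 2)) * (x ^ ε) ^ a := by
  have hlog : 0 < Real.log 2 := Real.log_pos one_lt_two
  have hexp : 1 + a * (ε * Real.log 2) ≤ (x ^ ε) ^ a := by
    calc 1 + a * (ε * Real.log 2) ≤ (1 + ε * Real.log 2) ^ a :=
          one_add_mul_le_pow (by nlinarith [mul_pos hε hlog]) a
      _ ≤ (2 ^ ε) ^ a := by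
          gcongr
          rw [Real.rpow_def_of_pos two_pos]
          linarith [Real.add_one_le_exp (Real.log 2 * ε)]
      _ ≤ (x ^ ε) ^ a := by gcongr
  calc (a : ℝ) + 1
      ≤ a + 1 + (1 / (ε * Real.log 2) + a * (ε * Real.log 2)) :=
        le_add_of_nonneg_right (by positivity)
    _ = (1 + 1 / (ε * Real.log 2)) * (1 + a * (ε * Real.log 2)) := by field_simp; ring
    _ ≤ (1 + 1 / (ε * Real.log 2)) * (x ^ ε) ^ a := by gcongr

lemma add_one_le_rpow_pow {ε x : ℝ} (hε : 0 < ε) (hx : 2 ^ (1 / ε) ≤ x) (a : ℕ) :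
    (a : ℝ) + 1 ≤ (x ^ ε) ^ a := by
  have htwo : (2 : ℝ) ≤ x ^ ε := by
    rwa [one_div, Real.rpow_inv_le_iff_of_pos zero_le_two
      ((Real.rpow_nonneg zero_le_two _).trans hx) hε] at hx
  calc (a : ℝ) + 1 ≤ 2 ^ a := by exact_mod_cast Nat.lt_two_pow_self (n := a)
    _ ≤ (x ^ ε) ^ a := by gcongr

lemma natCast_rpow_eq_prod_primeFactors {n : ℕ} (hn : n ≠ 0) (ε : ℝ) :
    (n : ℝ) ^ ε = ∏ p ∈ n.primeFactors, ((p : ℝ) ^ ε) ^ n.factorization p := by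
  conv_lhs => rw [← Nat.prod_factorization_pow_eq_self hn, Finsupp.prod, Nat.support_factorization]
  push_cast
  rw [← Real.finsetProd_rpow _ _ fun p _ => by positivity]
  exact prod_congr rfl fun p _ => (Real.rpow_pow_comm p.cast_nonneg _ _).symm

/- Primes above `2 ^ (1 / ε)` contribute at most a factor `1` to `d(n) / n ^ ε`, and each of the
finitely many others at most the constant of `add_one_le_mul_rpow_pow`. -/
lemma exists_card_divisors_le_mul_rpow {ε : ℝ} (hε : 0 < ε) :
    ∃ C : ℝ, 0 < C ∧ ∀ n : ℕ, n ≠ 0 → (#n.divisors : ℝ) ≤ C * (n : ℝ) ^ ε := by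
  set P : ℕ := ⌈(2 : ℝ) ^ (1 / ε)⌉₊
  set B : ℝ := 1 + 1 / (ε * Real.log 2)
  have hB : 1 ≤ B := le_add_of_nonneg_right (by positivity)
  refine ⟨B ^ P, by positivity, fun n hn => ?_⟩
  have hlocal (p : ℕ) (hp : p ∈ n.primeFactors) : (n.factorization p : ℝ) + 1 ≤
      (if p < P then B else 1) * ((p : ℝ) ^ ε) ^ n.factorization p := by
    split_ifs with hpP
    · exact add_one_le_mul_rpow_pow hε
        (by exact_mod_cast (Nat.prime_of_mem_primeFactors hp).two_le) _
    · rw [one_mul]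
      exact add_one_le_rpow_pow hε (Nat.ceil_le.mp (not_lt.mp hpP)) _
  have hsmall : ∏ p ∈ n.primeFactors, (if p < P then B else 1) ≤ B ^ P := by
    rw [prod_ite, prod_const, prod_const_one, mul_one]
    refine pow_le_pow_right₀ hB ?_
    simpa using card_le_card (show {p ∈ n.primeFactors | p < P} ⊆ range P from fun p => by simp)
  rw [Nat.card_divisors hn, natCast_rpow_eq_prod_primeFactors hn]
  push_cast
  calc ∏ p ∈ n.primeFactors, ((n.factorization p : ℝ) + 1)
      ≤ ∏ p ∈ n.primeFactors,
          (if p < P then B else 1) * ((p : ℝ) ^ ε) ^ n.factorization p :=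
        prod_le_prod (fun p _ => by positivity) hlocal
    _ ≤ B ^ P * ∏ p ∈ n.primeFactors, ((p : ℝ) ^ ε) ^ n.factorization p := by
        rw [prod_mul_distrib]
        gcongr

lemma sum_sum_mul_le {H N : ℕ} {D : ℝ} {f : ℕ → ℝ} (hf : ∀ m, 0 ≤ f m)
    (hD : ∀ m ∈ Icc 1 (H * N), (#m.divisors : ℝ) ≤ D) :
    ∑ h ∈ Icc 1 H, ∑ d ∈ Icc 1 N, f (h * d) ≤ D * ∑ m ∈ Icc 1 (H * N), f m := by
  have hmaps : ∀ x ∈ Icc 1 H ×ˢ Icc 1 N, x.1 * x.2 ∈ Icc 1 (H * N) := by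
    rintro ⟨h, d⟩ hx
    simp only [mem_product, mem_Icc] at hx ⊢
    exact ⟨Nat.mul_pos hx.1.1 hx.2.1, Nat.mul_le_mul hx.1.2 hx.2.2⟩
  rw [← sum_product' (Icc 1 H) (Icc 1 N) fun h d => f (h * d), ← sum_fiberwise_of_maps_to hmaps,
    mul_sum]
  refine sum_le_sum fun m hm => ?_
  have hfiber : {x ∈ Icc 1 H ×ˢ Icc 1 N | x.1 * x.2 = m} ⊆ m.divisorsAntidiagonal := fun x hx =>
    Nat.mem_divisorsAntidiagonal.mpr
      ⟨(mem_filter.mp hx).2, (Nat.pos_of_ne_zero fun h0 => by simp [h0] at hm).ne'⟩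
  have hcard : #{x ∈ Icc 1 H ×ˢ Icc 1 N | x.1 * x.2 = m} ≤ #m.divisors := by
    simpa only [← Nat.map_div_right_divisors, card_map] using card_le_card hfiber
  calc ∑ x ∈ Icc 1 H ×ˢ Icc 1 N with x.1 * x.2 = m, f (x.1 * x.2)
      = #{x ∈ Icc 1 H ×ˢ Icc 1 N | x.1 * x.2 = m} * f m := by
        rw [sum_congr rfl fun x hx => congrArg f (mem_filter.mp hx).2, sum_const, nsmul_eq_mul]
    _ ≤ D * f m := mul_le_mul_of_nonneg_right ((Nat.cast_le.mpr hcard).trans (hD m hm)) (hf m)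

end DivisorBound

section DistNearestInt

lemma distNearestInt_nonneg (x : ℝ) : 0 ≤ distNearestInt x := abs_nonneg _

lemma distNearestInt_le_abs_sub_intCast (x : ℝ) (n : ℤ) : distNearestInt x ≤ |x - n| :=
  round_le x n

lemma distNearestInt_neg (x : ℝ) : distNearestInt (-x) = distNearestInt x := by
  have hle (y : ℝ) : distNearestInt (-y) ≤ distNearestInt y := by
    have h := distNearestInt_le_abs_sub_intCast (-y) (-round y)
    rwa [Int.cast_neg, neg_sub_neg, abs_sub_comm] at h
  exact (hle x).antisymm (by simpa using hle (-x))

end DistNearestInt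

section SeparatedPoints

variable {ι : Type*} {s : Finset ι} {x : ι → ℝ} {R : ℝ} {g : ℝ → ℝ}

lemma sum_antitoneOn_le_of_separated (hg : AntitoneOn g (Set.Ici 0)) (hg0 : ∀ t, 0 ≤ t → 0 ≤ g t)
    (hsep : (s : Set ι).Pairwise fun i j => 1 ≤ |x i - x j|)
    (hx0 : ∀ i ∈ s, 0 ≤ x i) (hxR : ∀ i ∈ s, x i ≤ R) :
    ∑ i ∈ s, g (x i) ≤ ∑ j ∈ range (⌊R⌋₊ + 1), g j := by
  have hinj : Set.InjOn (fun i => ⌊x i⌋₊) s := fun i hi j hj hij => by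
    by_contra hne
    refine (hsep hi hj hne).not_gt (Int.abs_sub_lt_one_of_floor_eq_floor ?_)
    rw [← Int.natCast_floor_eq_floor (hx0 i hi), ← Int.natCast_floor_eq_floor (hx0 j hj)]
    exact congrArg _ hij
  calc ∑ i ∈ s, g (x i) ≤ ∑ i ∈ s, g ⌊x i⌋₊ := sum_le_sum fun i hi =>
        hg (Set.mem_Ici.mpr (Nat.cast_nonneg _)) (hx0 i hi) (Nat.floor_le (hx0 i hi))
    _ = ∑ j ∈ s.image fun i => ⌊x i⌋₊, g j := (sum_image (f := fun j : ℕ => g j) hinj).symm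
    _ ≤ ∑ j ∈ range (⌊R⌋₊ + 1), g j := by
        refine sum_le_sum_of_subset_of_nonneg ?_ fun j _ _ => hg0 j j.cast_nonneg
        refine image_subset_iff.mpr fun i hi => mem_range_succ_iff.mpr ?_
        exact Nat.floor_le_floor (hxR i hi)

lemma sum_antitoneOn_abs_le_of_separated (hg : AntitoneOn g (Set.Ici 0))
    (hg0 : ∀ t, 0 ≤ t → 0 ≤ g t) (hsep : (s : Set ι).Pairwise fun i j => 1 ≤ |x i - x j|)
    (hxR : ∀ i ∈ s, |x i| ≤ R) :
    ∑ i ∈ s, g |x i| ≤ 2 * ∑ j ∈ range (⌊R⌋₊ + 1), g j := by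
  have hside (p : ι → Prop) [DecidablePred p] (y : ι → ℝ)
      (hy : ∀ i ∈ s, p i → |x i| = y i) (hxy : ∀ i j, |y i - y j| = |x i - x j|) :
      ∑ i ∈ s with p i, g |x i| ≤ ∑ j ∈ range (⌊R⌋₊ + 1), g j := by
    have hmem (i : ι) (hi : i ∈ s.filter p) := mem_filter.mp hi
    rw [sum_congr rfl fun i hi => congrArg g (hy i (hmem i hi).1 (hmem i hi).2)]
    refine sum_antitoneOn_le_of_separated hg hg0 ?_ ?_ ?_
    · intro i hi j hj hij
      rw [hxy]
      exact hsep (hmem i hi).1 (hmem j hj).1 hij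
    · intro i hi
      exact (hy i (hmem i hi).1 (hmem i hi).2) ▸ abs_nonneg (x i)
    · intro i hi
      exact (hy i (hmem i hi).1 (hmem i hi).2) ▸ hxR i (hmem i hi).1
  rw [← sum_filter_add_sum_filter_not s fun i => 0 ≤ x i, two_mul]
  refine add_le_add (hside _ x (fun i _ hi => abs_of_nonneg hi) fun i j => rfl)
    (hside _ (fun i => -x i) (fun i _ hi => abs_of_nonpos (not_le.mp hi).le) fun i j => ?_)
  rw [neg_sub_neg, abs_sub_comm]

end SeparatedPoints

section GeomMajorant

/-- The majorant `N / (1 + N‖x‖)` of geometric sums of length at most `N` with frequency `x`. It is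
comparable to the usual `min(N, 1 / ‖x‖)` but needs no convention at integers `x`. -/
noncomputable def geomMajorant (N x : ℝ) : ℝ := N / (1 + N * distNearestInt x)

lemma geomMajorant_nonneg {N : ℝ} (hN : 0 ≤ N) (x : ℝ) : 0 ≤ geomMajorant N x :=
  div_nonneg hN (add_nonneg zero_le_one (mul_nonneg hN (distNearestInt_nonneg x)))

lemma sum_range_div_one_add_mul_le {A N : ℝ} (hA : 1 ≤ A) (hN : 0 < N) :
    ∑ j ∈ range (⌊A⌋₊ + 1), N / (1 + N * (j / A)) ≤ N + A * (1 + Real.log A) := by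
  rw [sum_range_succ', add_comm]
  refine add_le_add (by simp) ?_
  calc ∑ j ∈ range ⌊A⌋₊, N / (1 + N * ((j + 1 : ℕ) / A))
      ≤ ∑ j ∈ range ⌊A⌋₊, A * ((j + 1 : ℕ) : ℝ)⁻¹ := by
        refine sum_le_sum fun j _ => ?_
        rw [← div_eq_mul_inv, div_le_div_iff₀ (by positivity) (by positivity)]
        calc N * ((j + 1 : ℕ) : ℝ) = A * (N * ((j + 1 : ℕ) / A)) := by field_simp
          _ ≤ A * (1 + N * ((j + 1 : ℕ) / A)) := by gcongr; linarith
    _ = A * (harmonic ⌊A⌋₊ : ℝ) := by rw [← mul_sum, harmonic]; push_cast; rfl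
    _ ≤ A * (1 + Real.log A) := by gcongr; exact harmonic_floor_le_one_add_log A hA

lemma distNearestInt_div {A : ℝ} (hA : 0 < A) (t : ℝ) :
    distNearestInt (t / A) = |t - round (t / A) * A| / A := by
  rw [distNearestInt, ← abs_of_pos hA, ← abs_div, abs_of_pos hA, sub_div,
    mul_div_cancel_right₀ _ hA.ne']

/- The `m` with `m / A` nearest to a fixed integer `r` are spread around `r * A` with gaps `≥ 1`. -/
lemma sum_geomMajorant_filter_round_le {A N : ℝ} (hA : 1 ≤ A) (hN : 0 < N) (s : Finset ℕ) (r : ℤ) :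
    ∑ m ∈ s with round ((m : ℕ) / A : ℝ) = r, geomMajorant N (m / A) ≤
      2 * (N + A * (1 + Real.log A)) := by
  have hA0 : 0 < A := one_pos.trans_le hA
  have hdist (m : ℕ) (hm : m ∈ s.filter fun m : ℕ => round ((m : ℝ) / A) = r) :
      distNearestInt (m / A) = |m - r * A| / A := by
    rw [distNearestInt_div hA0, (mem_filter.mp hm).2]
  have hanti : AntitoneOn (fun t => N / (1 + N * (t / A))) (Set.Ici 0) := fun t ht u _ htu => by
    have : 0 ≤ t := ht
    dsimp only
    gcongr
  calc ∑ m ∈ s with round ((m : ℕ) / A : ℝ) = r, geomMajorant N (m / A)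
      = ∑ m ∈ s with round ((m : ℕ) / A : ℝ) = r, N / (1 + N * (|m - r * A| / A)) :=
        sum_congr rfl fun m hm => by rw [geomMajorant, hdist m hm]
    _ ≤ 2 * ∑ j ∈ range (⌊A⌋₊ + 1), N / (1 + N * (j / A)) := by
        refine sum_antitoneOn_abs_le_of_separated (x := fun m : ℕ => (m : ℝ) - r * A) hanti
          (fun t ht => by positivity) (fun i _ j _ hij => ?_) fun m hm => ?_
        · simp only [sub_sub_sub_cancel_right]
          exact_mod_cast Int.one_le_abs (sub_ne_zero.mpr (Nat.cast_injective.ne hij))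
        · have hhalf : |m - r * A| / A ≤ 1 / 2 := hdist m hm ▸ abs_sub_round _
          rw [div_le_iff₀ hA0] at hhalf
          linarith
    _ ≤ 2 * (N + A * (1 + Real.log A)) := by gcongr; exact sum_range_div_one_add_mul_le hA hN

lemma sum_geomMajorant_le {A N : ℝ} (hA : 1 ≤ A) (hN : 0 < N) (M : ℕ) :
    ∑ m ∈ Icc 1 M, geomMajorant N (m / A) ≤ (M / A + 2) * (2 * (N + A * (1 + Real.log A))) := by
  have hmaps : ∀ m ∈ Icc 1 M, round ((m : ℝ) / A) ∈ Icc (0 : ℤ) (⌊(M : ℝ) / A⌋₊ + 1 : ℕ) := by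
    intro m hm
    have hle : (m : ℝ) / A ≤ M / A := by gcongr; exact (mem_Icc.mp hm).2
    rw [round_eq, mem_Icc, Int.le_floor, ← Int.lt_add_one_iff, Int.floor_lt]
    refine ⟨by push_cast; positivity, ?_⟩
    push_cast
    linarith [Nat.lt_floor_add_one ((M : ℝ) / A)]
  rw [← sum_fiberwise_of_maps_to hmaps]
  calc ∑ r ∈ Icc (0 : ℤ) (⌊(M : ℝ) / A⌋₊ + 1 : ℕ),
        ∑ m ∈ Icc 1 M with round ((m : ℕ) / A : ℝ) = r, geomMajorant N (m / A)
      ≤ (⌊(M : ℝ) / A⌋₊ + 2) * (2 * (N + A * (1 + Real.log A))) := by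
        refine (sum_le_card_nsmul _ _ _ fun r _ =>
          sum_geomMajorant_filter_round_le hA hN _ r).trans_eq ?_
        rw [Int.card_Icc, nsmul_eq_mul, sub_zero, Int.toNat_natCast_add_one]
        push_cast
        ring
    _ ≤ (M / A + 2) * (2 * (N + A * (1 + Real.log A))) := by
        have := Real.log_nonneg hA
        gcongr
        exact Nat.floor_le (by positivity)

end GeomMajorant

section ExponentialSums

lemma inner_fourierChar (x y : ℝ) : inner ℂ (𝐞 x : ℂ) (𝐞 y) = 𝐞 (y - x) := by
  rw [RCLike.inner_apply, AddChar.map_sub_eq_div, Circle.coe_div, ← Circle.coe_inv_eq_conj,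
    Circle.coe_inv, div_eq_mul_inv]

lemma fourierChar_natCast_mul (n : ℕ) (x : ℝ) : (𝐞 (n * x) : ℂ) = (𝐞 x : ℂ) ^ n := by
  rw [← nsmul_eq_mul, AddChar.map_nsmul_eq_pow, Circle.coe_pow]

lemma fourierChar_sub_round (x : ℝ) : 𝐞 (x - round x) = 𝐞 x := by
  have hint : 𝐞 (round x : ℝ) = 1 := Circle.ext <| by
    rw [Real.fourierChar_apply, Circle.coe_one, ← Complex.exp_int_mul_two_pi_mul_I (round x)]
    congr 1
    push_cast
    ring
  rw [AddChar.map_sub_eq_div, hint, div_one]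

lemma four_mul_distNearestInt_le_norm_fourierChar_sub_one (x : ℝ) :
    4 * distNearestInt x ≤ ‖(𝐞 x : ℂ) - 1‖ := by
  rw [← fourierChar_sub_round x, distNearestInt, Real.fourierChar_apply,
    mul_comm (_ : ℂ), Complex.norm_exp_I_mul_ofReal_sub_one, norm_mul, Real.norm_eq_abs,
    Real.norm_eq_abs, abs_two]
  set y := x - round x
  have hπy : |2 * Real.pi * y / 2| = Real.pi * |y| := by
    rw [mul_assoc, mul_div_cancel_left₀ _ two_ne_zero, abs_mul, abs_of_pos Real.pi_pos]
  have hsin := Real.mul_abs_le_abs_sin (x := 2 * Real.pi * y / 2) (by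
    rw [hπy]
    nlinarith [Real.pi_pos, abs_sub_round x])
  rw [hπy, ← mul_assoc, div_mul_cancel₀ _ Real.pi_ne_zero] at hsin
  linarith

lemma norm_sum_fourierChar_arithmetic_le {L : ℕ} {N : ℝ} (hN : 0 < N) (hL : (L : ℝ) ≤ N)
    (γ c : ℝ) : ‖∑ j ∈ range L, (𝐞 (j * γ + c) : ℂ)‖ ≤ 2 * geomMajorant N γ := by
  have htriv : ‖∑ j ∈ range L, (𝐞 (j * γ + c) : ℂ)‖ ≤ N :=
    (norm_sum_le_of_le _ fun j _ => (Circle.norm_coe _).le).trans (by simpa using hL)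
  have hgeom : ‖∑ j ∈ range L, (𝐞 (j * γ + c) : ℂ)‖ * ‖(𝐞 γ : ℂ) - 1‖ ≤ 2 := by
    simp only [AddChar.map_add_eq_mul, Circle.coe_mul, fourierChar_natCast_mul]
    rw [← sum_mul, norm_mul, Circle.norm_coe, mul_one, ← norm_mul, geom_sum_mul]
    refine (norm_sub_le _ _).trans ?_
    rw [norm_pow, Circle.norm_coe, one_pow, norm_one, one_add_one_eq_two]
  have hdist : ‖∑ j ∈ range L, (𝐞 (j * γ + c) : ℂ)‖ * (4 * distNearestInt γ) ≤ 2 :=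
    le_trans (by gcongr; exact four_mul_distNearestInt_le_norm_fourierChar_sub_one γ) hgeom
  have hγ := distNearestInt_nonneg γ
  rw [geomMajorant, ← mul_div_assoc, le_div_iff₀ (by positivity)]
  nlinarith

lemma norm_sq_sum_range_eq {𝕜 E : Type*} [RCLike 𝕜] [SeminormedAddCommGroup E]
    [InnerProductSpace 𝕜 E] (z : ℕ → E) (N : ℕ) :
    ‖∑ i ∈ range N, z i‖ ^ 2 = ∑ i ∈ range N, ‖z i‖ ^ 2 +
      2 * RCLike.re (∑ d ∈ Icc 1 N, ∑ j ∈ range (N - d), inner 𝕜 (z j) (z (j + d))) := by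
  induction N with
  | zero => simp
  | succ N ih =>
    have hreflect : ∑ d ∈ Icc 1 N, inner 𝕜 (z (N - d)) (z N) =
        inner 𝕜 (∑ i ∈ range N, z i) (z N) := by
      rw [sum_inner]
      exact sum_nbij' (N - ·) (N - ·) (by simp; omega) (by simp; omega) (by simp; omega)
        (by simp; omega) (by simp)
    have hdiff : ∑ d ∈ Icc 1 (N + 1), ∑ j ∈ range (N + 1 - d), inner 𝕜 (z j) (z (j + d)) =
        ∑ d ∈ Icc 1 N, ∑ j ∈ range (N - d), inner 𝕜 (z j) (z (j + d)) +
          inner 𝕜 (∑ i ∈ range N, z i) (z N) := by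
      rw [sum_Icc_succ_top (Nat.le_add_left 1 N), Nat.sub_self, range_zero, sum_empty, add_zero,
        ← hreflect, ← sum_add_distrib]
      refine sum_congr rfl fun d hd => ?_
      have hdN := (mem_Icc.mp hd).2
      rw [Nat.sub_add_comm hdN, sum_range_succ, Nat.sub_add_cancel hdN]
    rw [sum_range_succ, sum_range_succ, norm_add_sq (𝕜 := 𝕜), ih, hdiff, map_add]
    ring

lemma norm_sq_sum_fourierChar_eq (x : ℕ → ℝ) (N : ℕ) :
    ‖∑ i ∈ range N, (𝐞 (x i) : ℂ)‖ ^ 2 =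
      N + 2 * (∑ d ∈ Icc 1 N, ∑ j ∈ range (N - d), (𝐞 (x (j + d) - x j) : ℂ)).re := by
  rw [norm_sq_sum_range_eq (𝕜 := ℂ)]
  simp only [Circle.norm_coe, inner_fourierChar, one_pow, sum_const, card_range, nsmul_eq_mul,
    mul_one, RCLike.re_eq_complex_re]

lemma norm_sq_sum_fourierChar_quadratic_le {N : ℕ} (hN : 0 < N) (θ μ ν : ℝ) :
    ‖∑ i ∈ range N, (𝐞 (θ * i ^ 2 + μ * i + ν) : ℂ)‖ ^ 2 ≤
      N + 4 * ∑ d ∈ Icc 1 N, geomMajorant N (d * (2 * θ)) := by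
  have hlinear (d j : ℕ) : θ * ((j + d : ℕ) : ℝ) ^ 2 + μ * ((j + d : ℕ) : ℝ) + ν -
      (θ * (j : ℝ) ^ 2 + μ * j + ν) = j * (d * (2 * θ)) + (θ * d ^ 2 + μ * d) := by
    push_cast
    ring
  rw [norm_sq_sum_fourierChar_eq]
  simp only [hlinear]
  have hdiff : (∑ d ∈ Icc 1 N, ∑ j ∈ range (N - d),
      (𝐞 (j * (d * (2 * θ)) + (θ * d ^ 2 + μ * d)) : ℂ)).re ≤
        2 * ∑ d ∈ Icc 1 N, geomMajorant N (d * (2 * θ)) := by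
    rw [mul_sum]
    exact (Complex.re_le_norm _).trans <| norm_sum_le_of_le _ fun d _ =>
      norm_sum_fourierChar_arithmetic_le (Nat.cast_pos.mpr hN)
        (Nat.cast_le.mpr (Nat.sub_le N d)) _ _
  linarith

end ExponentialSums

section FejerKernel

lemma norm_sq_sum_fourierChar_mul_eq (H : ℕ) (x : ℝ) :
    ‖∑ h ∈ range H, (𝐞 (h * x) : ℂ)‖ ^ 2 =
      H + 2 * (∑ h ∈ Icc 1 H, ((H - h : ℕ) : ℂ) * 𝐞 (h * x)).re := by
  rw [norm_sq_sum_fourierChar_eq fun h : ℕ => h * x]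
  congr 3
  refine sum_congr rfl fun d _ => ?_
  simp only [Nat.cast_add, add_mul, add_sub_cancel_left, sum_const, card_range, nsmul_eq_mul]

lemma one_half_le_re_fourierChar {y : ℝ} (hy : |y| ≤ 1 / 8) : 1 / 2 ≤ (𝐞 y : ℂ).re := by
  rw [Real.fourierChar_apply, Complex.exp_ofReal_mul_I_re]
  have hsq : (2 * Real.pi * y) ^ 2 ≤ 1 := by
    rw [sq_le_one_iff_abs_le_one, abs_mul, abs_of_pos Real.two_pi_pos]
    nlinarith [Real.pi_pos, Real.pi_lt_four, abs_nonneg y]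
  linarith [Real.one_sub_sq_div_two_le_cos (x := 2 * Real.pi * y)]

lemma half_le_norm_sum_fourierChar_mul {H : ℕ} {x : ℝ} (hx : distNearestInt x ≤ 1 / (8 * H)) :
    (H : ℝ) / 2 ≤ ‖∑ h ∈ range H, (𝐞 (h * x) : ℂ)‖ := by
  have hterm (h : ℕ) (hh : h ∈ range H) : 1 / 2 ≤ (𝐞 (h * x) : ℂ).re := by
    have hH : (0 : ℝ) < H := Nat.cast_pos.mpr (pos_of_gt (mem_range.mp hh))
    rw [fourierChar_natCast_mul, ← fourierChar_sub_round, ← fourierChar_natCast_mul]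
    refine one_half_le_re_fourierChar ?_
    rw [abs_mul, Nat.abs_cast]
    calc (h : ℝ) * |x - round x| ≤ H * (1 / (8 * H)) := by
          gcongr
          · exact (mem_range.mp hh).le
          · exact hx
      _ = 1 / 8 := by field_simp
  calc (H : ℝ) / 2 = #(range H) • (1 / 2 : ℝ) := by rw [card_range, nsmul_eq_mul]; ring
    _ ≤ ∑ h ∈ range H, (𝐞 (h * x) : ℂ).re := card_nsmul_le_sum _ _ _ hterm
    _ = (∑ h ∈ range H, (𝐞 (h * x) : ℂ)).re := (Complex.re_sum _ _).symm
    _ ≤ ‖∑ h ∈ range H, (𝐞 (h * x) : ℂ)‖ := Complex.re_le_norm _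

lemma sum_norm_sq_sum_fourierChar_mul_le {ι : Type*} (t : Finset ι) (x : ι → ℝ) (H : ℕ) :
    ∑ i ∈ t, ‖∑ h ∈ range H, (𝐞 (h * x i) : ℂ)‖ ^ 2 ≤
      #t * H + 2 * (H * ∑ h ∈ Icc 1 H, ‖∑ i ∈ t, (𝐞 (h * x i) : ℂ)‖) := by
  simp only [norm_sq_sum_fourierChar_mul_eq]
  rw [sum_add_distrib, sum_const, nsmul_eq_mul, ← mul_sum, ← Complex.re_sum, sum_comm]
  gcongr
  rw [mul_sum]
  refine (Complex.re_le_norm _).trans (norm_sum_le_of_le _ fun h _ => ?_)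
  rw [← mul_sum, norm_mul, Complex.norm_natCast]
  gcongr
  exact Nat.sub_le H h

/- Integrate the Fejér kernel of order `H`, which is `≥ H ^ 2 / 4` where `‖x i‖ ≤ 1 / (8H)`. -/
lemma card_mul_le_sum_norm_sum_fourierChar {ι : Type*} {s t : Finset ι} (hst : s ⊆ t) {H : ℕ}
    (hH : 0 < H) {x : ι → ℝ} (hx : ∀ i ∈ s, distNearestInt (x i) ≤ 1 / (8 * H)) :
    (#s : ℝ) * H ≤ 4 * #t + 8 * ∑ h ∈ Icc 1 H, ‖∑ i ∈ t, (𝐞 (h * x i) : ℂ)‖ := by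
  have hH' : (0 : ℝ) < H := Nat.cast_pos.mpr hH
  have hlower : (#s : ℝ) * (H / 2) ^ 2 ≤ ∑ i ∈ t, ‖∑ h ∈ range H, (𝐞 (h * x i) : ℂ)‖ ^ 2 := by
    rw [← nsmul_eq_mul]
    refine (card_nsmul_le_sum s _ _ fun i hi => ?_).trans
      (sum_le_sum_of_subset_of_nonneg hst fun i _ _ => sq_nonneg _)
    gcongr
    exact half_le_norm_sum_fourierChar_mul (hx i hi)
  refine le_of_mul_le_mul_right ?_ hH'
  linarith [hlower.trans (sum_norm_sq_sum_fourierChar_mul_le t x H)]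

end FejerKernel

section QuadraticPhases

lemma sum_norm_sq_sum_fourierChar_quadratic_le {A D : ℝ} {H N : ℕ} (hA : 1 ≤ A) (hH : 0 < H)
    (hN : 0 < N) (hD : ∀ m ∈ Icc 1 (H * N), (#m.divisors : ℝ) ≤ D) (μ ν : ℝ) :
    ∑ h ∈ Icc 1 H, ‖∑ n ∈ range N, (𝐞 (h * ((n : ℝ) ^ 2 / (2 * A) + μ * n + ν)) : ℂ)‖ ^ 2 ≤
      H * N + 4 * (D * ((H * N / A + 2) * (2 * (N + A * (1 + Real.log A))))) := by
  have hN0 : (0 : ℝ) < N := Nat.cast_pos.mpr hN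
  have hD0 : 0 ≤ D :=
    (Nat.cast_nonneg _).trans (hD 1 (mem_Icc.mpr ⟨le_rfl, Nat.mul_pos hH hN⟩))
  have hweyl (h : ℕ) :
      ‖∑ n ∈ range N, (𝐞 (h * ((n : ℝ) ^ 2 / (2 * A) + μ * n + ν)) : ℂ)‖ ^ 2 ≤
        N + 4 * ∑ d ∈ Icc 1 N, geomMajorant N ((h * d : ℕ) / A) := by
    convert norm_sq_sum_fourierChar_quadratic_le hN (h / (2 * A)) (h * μ) (h * ν) using 6
    · ring_nf
    · push_cast
      field_simp
  calc _ ≤ ∑ h ∈ Icc 1 H, (N + 4 * ∑ d ∈ Icc 1 N, geomMajorant N ((h * d : ℕ) / A)) :=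
        sum_le_sum fun h _ => hweyl h
    _ = H * N + 4 * ∑ h ∈ Icc 1 H, ∑ d ∈ Icc 1 N, geomMajorant N ((h * d : ℕ) / A) := by
        rw [sum_add_distrib, ← mul_sum, sum_const, Nat.card_Icc, nsmul_eq_mul, Nat.add_sub_cancel]
    _ ≤ H * N + 4 * (D * ∑ m ∈ Icc 1 (H * N), geomMajorant N (m / A)) := by
        gcongr
        exact sum_sum_mul_le (f := fun m => geomMajorant N (m / A))
          (fun m => geomMajorant_nonneg hN0.le _) hD
    _ ≤ _ := by
        gcongr
        exact_mod_cast sum_geomMajorant_le hA hN0 (H * N)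

lemma sum_norm_sq_sum_fourierChar_quadratic_le_of_sq_le {A K D : ℝ} {H N : ℕ} (hA : 1 ≤ A)
    (hAK : 2 * A ≤ K) (hH : 0 < H) (hN : 0 < N) (hNK : N ≤ 2 * K) (hNsq : (N : ℝ) ^ 2 ≤ 8 * K * A)
    (hD : ∀ m ∈ Icc 1 (H * N), (#m.divisors : ℝ) ≤ D) (μ ν : ℝ) :
    ∑ h ∈ Icc 1 H, ‖∑ n ∈ range N, (𝐞 (h * ((n : ℝ) ^ 2 / (2 * A) + μ * n + ν)) : ℂ)‖ ^ 2 ≤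
      2 * (H * K) + 128 * (D * (H * K * (1 + Real.log A))) := by
  have hA0 : 0 < A := one_pos.trans_le hA
  have hK : 0 < K := by linarith
  have hD0 : 0 ≤ D :=
    (Nat.cast_nonneg _).trans (hD 1 (mem_Icc.mpr ⟨le_rfl, Nat.mul_pos hH hN⟩))
  refine (sum_norm_sq_sum_fourierChar_quadratic_le hA hH hN hD μ ν).trans ?_
  set L := 1 + Real.log A
  have hL : 1 ≤ L := le_add_of_nonneg_right (Real.log_nonneg hA)
  have hKHK : K ≤ H * K := le_mul_of_one_le_left hK.le (Nat.one_le_cast.mpr hH)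
  have hHKL : H * K ≤ H * K * L := le_mul_of_one_le_right (by positivity) hL
  have hNA : (N : ℝ) ^ 2 / A ≤ 8 * K := (div_le_iff₀ hA0).mpr hNsq
  have hsum : (H * N / A + 2) * (2 * (N + A * L)) ≤ 32 * (H * K * L) := by
    calc (H * N / A + 2) * (2 * (N + A * L))
        = 2 * (H * (N ^ 2 / A)) + 2 * (H * N * L) + 4 * N + 2 * (2 * A) * L := by field_simp; ring
      _ ≤ 2 * (H * (8 * K)) + 2 * (H * (2 * K) * L) + 4 * (2 * K) + 2 * (H * K) * L := by
          have h2A : 2 * A ≤ H * K := hAK.trans hKHK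
          gcongr
      _ ≤ 32 * (H * K * L) := by linarith
  calc H * N + 4 * (D * ((H * N / A + 2) * (2 * (N + A * L))))
      ≤ H * (2 * K) + 4 * (D * (32 * (H * K * L))) := by gcongr
    _ = 2 * (H * K) + 128 * (D * (H * K * L)) := by ring

lemma exists_card_divisors_le_of_le_sq {ε : ℝ} (hε : 0 < ε) :
    ∃ C : ℝ, 0 < C ∧ ∀ (K : ℝ) (n : ℕ), 0 ≤ K → n ≠ 0 → (n : ℝ) ≤ K ^ 2 →
      (#n.divisors : ℝ) ≤ C * K ^ ε := by
  obtain ⟨C, hC, hdiv⟩ := exists_card_divisors_le_mul_rpow (half_pos hε)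
  refine ⟨C, hC, fun K n hK hn hnK => (hdiv n hn).trans ?_⟩
  gcongr
  calc (n : ℝ) ^ (ε / 2) ≤ (K ^ 2) ^ (ε / 2) := by gcongr
    _ = K ^ ε := by rw [← Real.rpow_natCast_mul hK, Nat.cast_two, mul_div_cancel₀ _ two_ne_zero]

lemma one_add_log_le_mul_rpow {ε x : ℝ} (hε : 0 < ε) (hx : 1 ≤ x) :
    1 + Real.log x ≤ (1 + 1 / ε) * x ^ ε := by
  rw [add_mul, one_mul, one_div_mul_eq_div]
  exact add_le_add (Real.one_le_rpow hx hε.le)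
    (Real.log_le_rpow_div (zero_le_one.trans hx) hε)

lemma rpow_one_half_add_sq {K : ℝ} (hK : 0 < K) (ε : ℝ) :
    (K ^ (1 / 2 + ε)) ^ 2 = K * (K ^ ε * K ^ ε) := by
  rw [Real.rpow_add hK, ← Real.sqrt_eq_rpow, mul_pow, Real.sq_sqrt hK.le, sq (K ^ ε)]

lemma exists_sum_norm_sq_sum_fourierChar_quadratic_le {ε : ℝ} (hε : 0 < ε) :
    ∃ C : ℝ, 0 < C ∧ ∀ (K α μ ν : ℝ) (H N : ℕ), 2 ≤ α → α ≤ √K → 0 < H → H ≤ α →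
      0 < N → N ≤ 2 * (α * √K) →
      ∑ h ∈ Icc 1 H, ‖∑ n ∈ range N, (𝐞 (h * ((n : ℝ) ^ 2 / α ^ 2 + μ * n + ν)) : ℂ)‖ ^ 2 ≤
        C * (H * (K ^ (1 / 2 + ε)) ^ 2) := by
  obtain ⟨C, hC, hdiv⟩ := exists_card_divisors_le_of_le_sq hε
  refine ⟨2 + 128 * (C * (1 + 1 / ε)), by positivity, fun K α μ ν H N hα hαK hH hHα hN hNK => ?_⟩
  have hsqrt : 2 ≤ √K := hα.trans hαK
  have hK : 0 < K := Real.sqrt_pos.mp (two_pos.trans_le hsqrt)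
  have hKK : √K * √K = K := Real.mul_self_sqrt hK.le
  have hK1 : 1 ≤ K := by nlinarith
  have hKε : 1 ≤ K ^ ε := Real.one_le_rpow hK1 hε.le
  have hA : 1 ≤ α ^ 2 / 2 := by nlinarith
  have hαK2 : α ^ 2 ≤ K := by nlinarith
  have hN2K : (N : ℝ) ≤ 2 * K := by nlinarith
  have hNsq : (N : ℝ) ^ 2 ≤ 8 * K * (α ^ 2 / 2) := by
    calc (N : ℝ) ^ 2 ≤ (2 * (α * √K)) ^ 2 := by gcongr
      _ = 4 * α ^ 2 * (√K * √K) := by ring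
      _ = 8 * K * (α ^ 2 / 2) := by rw [hKK]; ring
  have hHN : ((H * N : ℕ) : ℝ) ≤ K ^ 2 := by
    push_cast
    calc (H : ℝ) * N ≤ √K * (2 * K) := by gcongr; exact hHα.trans hαK
      _ ≤ √K * (√K * K) := by gcongr
      _ = K ^ 2 := by rw [← mul_assoc, hKK, sq]
  have hD (m : ℕ) (hm : m ∈ Icc 1 (H * N)) : (#m.divisors : ℝ) ≤ C * K ^ ε := by
    obtain ⟨hm1, hmHN⟩ := mem_Icc.mp hm
    exact hdiv K m hK.le (Nat.one_le_iff_ne_zero.mp hm1) ((Nat.cast_le.mpr hmHN).trans hHN)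
  have hmean := sum_norm_sq_sum_fourierChar_quadratic_le_of_sq_le hA (by linarith) hH hN hN2K hNsq
    hD μ ν
  rw [mul_div_cancel₀ _ two_ne_zero] at hmean
  have hlog : 1 + Real.log (α ^ 2 / 2) ≤ (1 + 1 / ε) * K ^ ε :=
    le_trans (by gcongr; linarith) (one_add_log_le_mul_rpow hε hK1)
  calc _ ≤ 2 * (H * K) + 128 * (C * K ^ ε * (H * K * (1 + Real.log (α ^ 2 / 2)))) := hmean
    _ ≤ 2 * (H * K * (K ^ ε * K ^ ε)) + 128 * (C * K ^ ε * (H * K * ((1 + 1 / ε) * K ^ ε))) := by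
        have hHK : H * K ≤ H * K * (K ^ ε * K ^ ε) :=
          le_mul_of_one_le_right (by positivity) (one_le_mul_of_one_le_of_one_le hKε hKε)
        gcongr
    _ = (2 + 128 * (C * (1 + 1 / ε))) * (H * (K ^ (1 / 2 + ε)) ^ 2) := by
        rw [rpow_one_half_add_sq hK]
        ring

lemma exists_card_mul_le_of_quadratic_near_int {ε : ℝ} (hε : 0 < ε) :
    ∃ C : ℝ, 0 < C ∧ ∀ (K α μ ν : ℝ) (H N : ℕ) (s : Finset ℕ), 2 ≤ α → α ≤ √K →
      0 < H → H ≤ α → 0 < N → N ≤ 2 * (α * √K) → s ⊆ range N →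
      (∀ n ∈ s, distNearestInt ((n : ℝ) ^ 2 / α ^ 2 + μ * n + ν) ≤ 1 / (8 * H)) →
      (#s : ℝ) * H ≤ 4 * N + C * (H * K ^ (1 / 2 + ε)) := by
  obtain ⟨C, hC, hmean⟩ := exists_sum_norm_sq_sum_fourierChar_quadratic_le hε
  refine ⟨8 * √C, by positivity, fun K α μ ν H N s hα hαK hH hHα hN hNK hs hnear => ?_⟩
  have hQ : 0 ≤ K ^ (1 / 2 + ε) :=
    Real.rpow_nonneg (Real.sqrt_pos.mp (two_pos.trans_le (hα.trans hαK))).le _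
  set T : ℕ → ℝ := fun h =>
    ‖∑ n ∈ range N, (𝐞 (h * ((n : ℝ) ^ 2 / α ^ 2 + μ * n + ν)) : ℂ)‖
  have hT : ∑ h ∈ Icc 1 H, T h ≤ √C * (H * K ^ (1 / 2 + ε)) := by
    refine le_of_sq_le_sq ?_ (by positivity)
    calc (∑ h ∈ Icc 1 H, T h) ^ 2 ≤ H * ∑ h ∈ Icc 1 H, T h ^ 2 := by
          simpa using sq_sum_le_card_mul_sum_sq (s := Icc 1 H) (f := T)
      _ ≤ H * (C * (H * (K ^ (1 / 2 + ε)) ^ 2)) := by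
          gcongr
          exact hmean K α μ ν H N hα hαK hH hHα hN hNK
      _ = (√C * (H * K ^ (1 / 2 + ε))) ^ 2 := by
          rw [mul_pow, Real.sq_sqrt hC.le]
          ring
  have hfejer := card_mul_le_sum_norm_sum_fourierChar hs hH hnear
  rw [card_range] at hfejer
  linarith

end QuadraticPhases

section CloseIndices

/-- The integers `K < k ≤ 2K` with `‖β + α√k‖ < δ`, as a finite set. -/
noncomputable def closeIndices (K α β δ : ℝ) : Finset ℕ :=
  {k ∈ Iic ⌊2 * K⌋₊ | K < (k : ℝ) ∧ (k : ℝ) ≤ 2 * K ∧ distNearestInt (β + α * √k) < δ}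

variable {K α β δ : ℝ} {k l : ℕ}

lemma mem_closeIndices : k ∈ closeIndices K α β δ ↔
    K < (k : ℝ) ∧ (k : ℝ) ≤ 2 * K ∧ distNearestInt (β + α * √k) < δ := by
  rw [closeIndices, mem_filter, mem_Iic, and_iff_right_of_imp fun h => Nat.le_floor h.2.1]

lemma coe_closeIndices : (closeIndices K α β δ : Set ℕ) =
    {k : ℕ | K < (k : ℝ) ∧ (k : ℝ) ≤ 2 * K ∧ distNearestInt (β + α * √k) < δ} :=
  Set.ext fun _ => mem_closeIndices

lemma closeIndices_mono {δ' : ℝ} (h : δ ≤ δ') : closeIndices K α β δ ⊆ closeIndices K α β δ' := by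
  intro k hk
  rw [mem_closeIndices] at hk ⊢
  exact ⟨hk.1, hk.2.1, hk.2.2.trans_le h⟩

lemma closeIndices_neg : closeIndices K (-α) (-β) δ = closeIndices K α β δ := by
  ext k
  rw [mem_closeIndices, mem_closeIndices, neg_mul, ← neg_add, distNearestInt_neg]

lemma exists_closeIndices_abs_eq (K α β δ : ℝ) :
    ∃ β', closeIndices K |α| β' δ = closeIndices K α β δ := by
  obtain hα | hα := abs_choice α
  · exact ⟨β, by rw [hα]⟩
  · exact ⟨-β, by rw [hα, closeIndices_neg]⟩

lemma sqrt_le_of_mem_closeIndices (hk : k ∈ closeIndices K α β δ) : √k ≤ 3 / 2 * √K := by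
  obtain ⟨hKk, hk2K, -⟩ := mem_closeIndices.mp hk
  refine Real.sqrt_le_iff.mpr ⟨by positivity, ?_⟩
  rw [mul_pow, Real.sq_sqrt (by linarith)]
  linarith

/-- The nearest integer to `β + α√k`, counted from the one to `β + α√K`. As a natural number it is
meaningful only for `0 ≤ α` and `K ≤ k`, where the difference is not negative. -/
noncomputable def nearestIndex (K α β : ℝ) (k : ℕ) : ℕ :=
  (round (β + α * √k) - round (β + α * √K)).toNat

lemma natCast_nearestIndex (hα : 0 ≤ α) (hk : K ≤ k) :
    (nearestIndex K α β k : ℝ) = round (β + α * √k) - round (β + α * √K) := by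
  have hround : round (β + α * √K) ≤ round (β + α * √k) := by
    rw [round_eq, round_eq]
    gcongr
  exact_mod_cast Int.toNat_of_nonneg (sub_nonneg.mpr hround)

lemma nearestIndex_lt (hα : 0 ≤ α) (hαK : 2 ≤ α * √K) (hk : k ∈ closeIndices K α β δ) :
    nearestIndex K α β k < ⌊α * √K⌋₊ + 1 := by
  refine Nat.lt_succ_of_le (Nat.le_floor ?_)
  rw [natCast_nearestIndex hα (mem_closeIndices.mp hk).1.le]
  have hsqrt := mul_le_mul_of_nonneg_left (sqrt_le_of_mem_closeIndices hk) hα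
  linarith [(abs_le.mp (abs_sub_round (β + α * √k))).1, (abs_le.mp (abs_sub_round (β + α * √K))).2]

lemma mul_sub_le_of_nearestIndex_eq (hα : 0 ≤ α) (hk : k ∈ closeIndices K α β δ)
    (hl : l ∈ closeIndices K α β δ) (h : nearestIndex K α β k = nearestIndex K α β l) :
    α * ((k : ℝ) - l) ≤ 6 * (δ * √K) := by
  obtain ⟨hKk, -, hkδ⟩ := mem_closeIndices.mp hk
  obtain ⟨hKl, -, hlδ⟩ := mem_closeIndices.mp hl
  have hround : (round (β + α * √k) : ℝ) = round (β + α * √l) := by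
    have := congrArg (Nat.cast (R := ℝ)) h
    rwa [natCast_nearestIndex hα hKk.le, natCast_nearestIndex hα hKl.le, sub_left_inj] at this
  have hdiff : α * (√k - √l) ≤ 2 * δ := by
    rw [distNearestInt] at hkδ hlδ
    linarith [(abs_lt.mp hkδ).2, (abs_lt.mp hlδ).1]
  have hδ : 0 ≤ δ := (distNearestInt_nonneg _).trans hkδ.le
  calc α * ((k : ℝ) - l) = α * (√k - √l) * (√k + √l) := by
        rw [mul_assoc, mul_comm (√k - √l), ← sq_sub_sq, Real.sq_sqrt k.cast_nonneg,
          Real.sq_sqrt l.cast_nonneg]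
    _ ≤ 2 * δ * (3 / 2 * √K + 3 / 2 * √K) := by
        gcongr
        · exact sqrt_le_of_mem_closeIndices hk
        · exact sqrt_le_of_mem_closeIndices hl
    _ = 6 * (δ * √K) := by ring

lemma distNearestInt_sq_div_le (hα : 0 < α) (hαK : 2 ≤ α * √K) (hk : k ∈ closeIndices K α β δ) :
    distNearestInt ((round (β + α * √k) - β) ^ 2 / α ^ 2) ≤ 4 * (δ * √K) / α := by
  have hkδ := (mem_closeIndices.mp hk).2.2.le
  have hhalf := abs_le.mp (abs_sub_round (β + α * √k))
  have hsqrt := mul_le_mul_of_nonneg_left (sqrt_le_of_mem_closeIndices hk) hα.le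
  set w := round (β + α * √k) - β with hw
  have hsub : |w - α * √k| ≤ δ := by
    rwa [distNearestInt, abs_sub_comm, ← sub_sub] at hkδ
  have hadd : |w + α * √k| ≤ 4 * (α * √K) := by
    have := mul_nonneg hα.le (Real.sqrt_nonneg k)
    exact abs_le.mpr ⟨by linarith, by linarith⟩
  have hfactor : w ^ 2 / α ^ 2 - (k : ℤ) = (w - α * √k) * (w + α * √k) / α ^ 2 := by
    rw [Int.cast_natCast]
    field_simp
    linear_combination α ^ 2 * Real.sq_sqrt k.cast_nonneg
  calc distNearestInt (w ^ 2 / α ^ 2) ≤ |w ^ 2 / α ^ 2 - (k : ℤ)| :=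
        distNearestInt_le_abs_sub_intCast _ _
    _ = |w - α * √k| * |w + α * √k| / α ^ 2 := by
        rw [hfactor, abs_div, abs_mul, abs_of_nonneg (sq_nonneg α)]
    _ ≤ δ * (4 * (α * √K)) / α ^ 2 := by
        have := (abs_nonneg _).trans hsub
        gcongr
    _ = 4 * (δ * √K) / α := by field_simp

lemma distNearestInt_quadratic_nearestIndex_le (hα : 0 < α) (hαK : 2 ≤ α * √K)
    (hk : k ∈ closeIndices K α β δ) :
    distNearestInt ((nearestIndex K α β k : ℝ) ^ 2 / α ^ 2 +
      2 * (round (β + α * √K) - β) / α ^ 2 * nearestIndex K α β k +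
      (round (β + α * √K) - β) ^ 2 / α ^ 2) ≤ 4 * (δ * √K) / α := by
  convert distNearestInt_sq_div_le hα hαK hk using 2
  rw [natCast_nearestIndex hα.le (mem_closeIndices.mp hk).1.le]
  ring

end CloseIndices

section Counting

lemma card_le_floor_add_one_mul_card_image {ι : Type*} [DecidableEq ι] {s : Finset ℕ} {f : ℕ → ι}
    {R : ℝ} (h : ∀ k ∈ s, ∀ l ∈ s, f k = f l → (k : ℝ) - l ≤ R) :
    #s ≤ (⌊R⌋₊ + 1) * #(s.image f) := by
  refine card_le_mul_card_image s _ fun i hi => ?_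
  obtain ⟨k₀, hk₀, rfl⟩ := mem_image.mp hi
  have hne : {k ∈ s | f k = f k₀}.Nonempty := ⟨k₀, mem_filter.mpr ⟨hk₀, rfl⟩⟩
  set m := {k ∈ s | f k = f k₀}.min' hne
  obtain ⟨hms, hm⟩ := mem_filter.mp (min'_mem _ hne)
  have hsub : {k ∈ s | f k = f k₀} ⊆ Icc m (m + ⌊R⌋₊) := fun k hk => by
    obtain ⟨hks, hkf⟩ := mem_filter.mp hk
    refine mem_Icc.mpr ⟨min'_le _ _ hk, Nat.sub_le_iff_le_add'.mp (Nat.le_floor ?_)⟩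
    rw [Nat.cast_sub (min'_le _ _ hk)]
    exact h k hks m hms (hkf.trans hm.symm)
  refine (card_le_card hsub).trans_eq ?_
  rw [Nat.card_Icc]
  omega

lemma card_closeIndices_le_of_le {K α β δ : ℝ} (hα : 0 < α) (hαK : 2 ≤ α * √K)
    (hαδ : α ≤ 32 * (δ * √K)) : (#(closeIndices K α β δ) : ℝ) ≤ 64 * (K * δ) := by
  have hsqrt : 0 < √K := pos_of_mul_pos_right (two_pos.trans_le hαK) hα.le
  have hδ : 0 < δ * √K := by linarith
  have hfiber : (#(closeIndices K α β δ) : ℝ) ≤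
      (⌊6 * (δ * √K) / α⌋₊ + 1) * #((closeIndices K α β δ).image (nearestIndex K α β)) := by
    exact_mod_cast card_le_floor_add_one_mul_card_image fun k hk l hl hkl =>
      (le_div_iff₀' hα).mpr (mul_sub_le_of_nearestIndex_eq hα.le hk hl hkl)
  have himage : (#((closeIndices K α β δ).image (nearestIndex K α β)) : ℝ) ≤ ⌊α * √K⌋₊ + 1 := by
    have hrange : (closeIndices K α β δ).image (nearestIndex K α β) ⊆ range (⌊α * √K⌋₊ + 1) :=
      image_subset_iff.mpr fun k hk => mem_range.mpr (nearestIndex_lt hα.le hαK hk)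
    exact_mod_cast (card_le_card hrange).trans_eq (card_range _)
  calc (#(closeIndices K α β δ) : ℝ)
      ≤ (6 * (δ * √K) / α + 32 * (δ * √K) / α) * (α * √K + α * √K / 2) := by
        refine hfiber.trans ?_
        gcongr
        · exact Nat.floor_le (by positivity)
        · exact (one_le_div hα).mpr hαδ
        · refine himage.trans ?_
          gcongr
          · exact Nat.floor_le (by positivity)
          · linarith
    _ = 57 * (√K ^ 2 * δ) := by field_simp; ring
    _ ≤ 64 * (K * δ) := by
        rw [Real.sq_sqrt (Real.sqrt_pos.mp hsqrt).le]
        have : 0 < K * δ := mul_pos (Real.sqrt_pos.mp hsqrt) (pos_of_mul_pos_left hδ hsqrt.le)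
        linarith

lemma nearestIndex_injOn {K α β δ : ℝ} (hα : 0 < α) (hαδ : 32 * (δ * √K) ≤ α) :
    Set.InjOn (nearestIndex K α β) (closeIndices K α β δ) := by
  have hle (k : ℕ) (hk : k ∈ closeIndices K α β δ) (l : ℕ) (hl : l ∈ closeIndices K α β δ)
      (h : nearestIndex K α β k = nearestIndex K α β l) : k ≤ l := by
    have hsub : α * ((k : ℝ) - l) < α * 1 := by
      linarith [mul_sub_le_of_nearestIndex_eq hα.le hk hl h]
    have hlt : (k : ℝ) < l + 1 := by linarith [lt_of_mul_lt_mul_left hsub hα.le]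
    exact Nat.lt_succ_iff.mp (by exact_mod_cast hlt)
  exact fun k hk l hl h => (hle k hk l hl h).antisymm (hle l hl k hk h.symm)

lemma exists_card_closeIndices_le_of_ge {ε : ℝ} (hε : 0 < ε) :
    ∃ C : ℝ, 0 < C ∧ ∀ K α β δ : ℝ, α ≤ √K → 1 ≤ δ * √K → 32 * (δ * √K) ≤ α →
      (#(closeIndices K α β δ) : ℝ) ≤ 512 * (K * δ) + C * K ^ (1 / 2 + ε) := by
  obtain ⟨C, hC, hquad⟩ := exists_card_mul_le_of_quadratic_near_int hε
  refine ⟨C, hC, fun K α β δ hαK hδ hαδ => ?_⟩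
  have hα : 32 ≤ α := by linarith
  have hα0 : 0 < α := by linarith
  have hK : 0 < K := Real.sqrt_pos.mp (hα0.trans_le hαK)
  have hαK2 : 2 ≤ α * √K := by nlinarith
  set H := ⌊α / (32 * (δ * √K))⌋₊
  have hH : 0 < H := Nat.floor_pos.mpr ((one_le_div (by positivity)).mpr hαδ)
  have hH1 : (1 : ℝ) ≤ H := Nat.one_le_cast.mpr hH
  have hHle : H * (32 * (δ * √K)) ≤ α :=
    (le_div_iff₀ (by positivity)).mp (Nat.floor_le (by positivity))
  have hHge : α ≤ (2 * H) * (32 * (δ * √K)) := by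
    rw [← div_le_iff₀ (by positivity)]
    linarith [Nat.lt_floor_add_one (α / (32 * (δ * √K)))]
  have hHα : (H : ℝ) ≤ α := (le_mul_of_one_le_right (by positivity) (by linarith)).trans hHle
  have hN : ((⌊α * √K⌋₊ + 1 : ℕ) : ℝ) ≤ 2 * (α * √K) := by
    push_cast
    linarith [Nat.floor_le (show 0 ≤ α * √K by positivity)]
  have hcount := hquad K α _ _ H _ ((closeIndices K α β δ).image (nearestIndex K α β))
    (by linarith) hαK hH hHα (Nat.succ_pos _) hN
    (image_subset_iff.mpr fun k hk => mem_range.mpr (nearestIndex_lt hα0.le hαK2 hk))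
    (forall_mem_image.mpr fun k hk =>
      (distNearestInt_quadratic_nearestIndex_le hα0 hαK2 hk).trans <| by
        rw [div_le_div_iff₀ hα0 (by positivity)]
        linarith)
  rw [card_image_of_injOn (nearestIndex_injOn hα0 hαδ)] at hcount
  refine le_of_mul_le_mul_right ?_ (one_pos.trans_le hH1)
  calc #(closeIndices K α β δ) * (H : ℝ)
      ≤ 4 * (2 * (2 * H * (32 * (δ * √K)) * √K)) + C * (H * K ^ (1 / 2 + ε)) := by
        refine hcount.trans ?_
        gcongr
        exact hN.trans (by gcongr)
    _ = (512 * (√K ^ 2 * δ) + C * K ^ (1 / 2 + ε)) * H := by ring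
    _ = (512 * (K * δ) + C * K ^ (1 / 2 + ε)) * H := by rw [Real.sq_sqrt hK.le]

lemma exists_card_closeIndices_le_of_one_le {ε : ℝ} (hε : 0 < ε) :
    ∃ C : ℝ, 0 < C ∧ ∀ K α β δ : ℝ, 0 < α → 2 ≤ α * √K → α ≤ √K → 1 ≤ δ * √K →
      (#(closeIndices K α β δ) : ℝ) ≤ C * (K * δ + K ^ (1 / 2 + ε)) := by
  obtain ⟨C, hC, hcount⟩ := exists_card_closeIndices_le_of_ge hε
  refine ⟨512 + C, by positivity, fun K α β δ hα hαK2 hαK hδ => ?_⟩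
  have hK : 0 < K := Real.sqrt_pos.mp (hα.trans_le hαK)
  have hKδ : 0 < K * δ :=
    mul_pos hK (pos_of_mul_pos_left (one_pos.trans_le hδ) (Real.sqrt_nonneg K))
  have hQ : 0 < K ^ (1 / 2 + ε) := Real.rpow_pos_of_pos hK _
  have hCKδ : 0 < C * (K * δ) := by positivity
  have hCQ : 0 < C * K ^ (1 / 2 + ε) := by positivity
  obtain hsmall | hlarge := le_total α (32 * (δ * √K))
  · linarith [card_closeIndices_le_of_le (β := β) hα hαK2 hsmall]
  · linarith [hcount K α β δ hαK hδ hlarge]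

lemma exists_card_closeIndices_le {ε : ℝ} (hε : 0 < ε) :
    ∃ C : ℝ, 0 < C ∧ ∀ K α β δ : ℝ, 0 < α → 2 ≤ α * √K → α ≤ √K → 0 ≤ δ →
      (#(closeIndices K α β δ) : ℝ) ≤ C * (K * δ + K ^ (1 / 2 + ε)) := by
  obtain ⟨C, hC, hcount⟩ := exists_card_closeIndices_le_of_one_le hε
  refine ⟨2 * C, by positivity, fun K α β δ hα hαK2 hαK hδ => ?_⟩
  have hsqrt : 0 < √K := hα.trans_le hαK
  have hK : 1 ≤ K := by nlinarith [Real.mul_self_sqrt (Real.sqrt_pos.mp hsqrt).le]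
  set δ' := max δ (√K)⁻¹
  have hδ' : 1 ≤ δ' * √K := (inv_le_iff_one_le_mul₀ hsqrt).mp (le_max_right _ _)
  have hKδ' : K * δ' ≤ K * δ + K ^ (1 / 2 + ε) := by
    calc K * δ' ≤ K * (δ + (√K)⁻¹) := by
          gcongr
          exact max_le_add_of_nonneg hδ (by positivity)
      _ = K * δ + K ^ (1 / 2 : ℝ) := by
          rw [mul_add, ← div_eq_mul_inv, Real.div_sqrt, Real.sqrt_eq_rpow]
      _ ≤ K * δ + K ^ (1 / 2 + ε) := by
          gcongr
          exact le_add_of_nonneg_right hε.le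
  calc (#(closeIndices K α β δ) : ℝ) ≤ #(closeIndices K α β δ') := by
        gcongr
        exact closeIndices_mono (le_max_left _ _)
    _ ≤ C * (K * δ' + K ^ (1 / 2 + ε)) := hcount K α β δ' hα hαK2 hαK hδ'
    _ ≤ C * (K * δ + K ^ (1 / 2 + ε) + (K * δ + K ^ (1 / 2 + ε))) := by
        gcongr
        exact le_add_of_nonneg_left (by positivity)
    _ = 2 * C * (K * δ + K ^ (1 / 2 + ε)) := by ring

end Counting

theorem count_small_fractional_parts (ε : ℝ) (hε : 0 < ε) :
    ∃ C : ℝ, 0 < C ∧ ∀ K α β δ : ℝ,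
      10 ≤ K → 2 * K ^ (-(1 : ℝ) / 2) ≤ |α| → |α| ≤ K ^ ((1 : ℝ) / 2) →
      0 < δ → δ < 1 / 2 →
      (Set.ncard {k : ℕ | K < (k : ℝ) ∧ (k : ℝ) ≤ 2 * K ∧
          distNearestInt (β + α * Real.sqrt k) < δ} : ℝ) ≤
        C * (K * δ + K ^ ((1 : ℝ) / 2 + ε)) := by
  obtain ⟨C, hC, hcount⟩ := exists_card_closeIndices_le hε
  refine ⟨C, hC, fun K α β δ hK hα hαK hδ _ => ?_⟩
  have hsqrt : 0 < √K := by positivity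
  rw [neg_div, Real.rpow_neg (by positivity), ← Real.sqrt_eq_rpow, ← div_eq_mul_inv,
    div_le_iff₀ hsqrt] at hα
  rw [← Real.sqrt_eq_rpow] at hαK
  have hα0 : 0 < |α| := pos_of_mul_pos_left (two_pos.trans_le hα) hsqrt.le
  obtain ⟨β', hβ'⟩ := exists_closeIndices_abs_eq K α β δ
  rw [← coe_closeIndices, Set.ncard_coe_finset, ← hβ']
  exact hcount K |α| β' δ hα0 hα hαK hδ.le
end

section
/- Fix an integer k ≥ 2 and 1 ≤ ℓ < k. For every ε > 0, the series s_{k;ℓ}(d) converges and |s_{k;ℓ}(d) − s_{k;ℓ}(d; y)| ≤ C(ε) · y^{−1/2+ε} for all y > 1. -/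
/-- The divisor function `d(n)`. -/
def divfun (n : ℕ) : ℕ := n.divisors.card

/-- The summand `d(n₁)⋯d(n_k)/(n₁⋯n_k)^{3/4}` for a tuple `v`. -/
noncomputable def sklTerm (k : ℕ) (v : Fin k → ℕ+) : ℝ :=
  (∏ j : Fin k, (divfun (v j) : ℝ)) / (∏ j : Fin k, ((v j : ℕ) : ℝ)) ^ ((3 : ℝ) / 4)

/-- The condition `√n₁ + ⋯ + √n_ℓ = √n_{ℓ+1} + ⋯ + √n_k`. -/
def sklCond (k l : ℕ) (v : Fin k → ℕ+) : Prop :=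
  ∑ j : Fin k, (if (j : ℕ) < l then (1 : ℝ) else -1) * Real.sqrt ((v j : ℕ)) = 0

/-- The series `s_{k;ℓ}(d)`. -/
noncomputable def skl (k l : ℕ) : ℝ :=
  ∑' v : {v : Fin k → ℕ+ // sklCond k l v}, sklTerm k v.1

/-- The truncated series `s_{k;ℓ}(d; y)`, restricted to tuples with all entries `≤ y`. -/
noncomputable def sklTrunc (k l : ℕ) (y : ℝ) : ℝ :=
  ∑' v : {v : Fin k → ℕ+ // sklCond k l v ∧ ∀ j, ((v j : ℕ) : ℝ) ≤ y}, sklTerm k v.1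

/-!
Square roots of integers lying in distinct classes modulo rational squares are linearly independent
over `ℚ`: if `a` is not a square then `√a` has trace zero. Hence in a solution `v` of
`∑ e_j √v_j = 0` the terms of each square class cancel among themselves, so every `v_j` has a
partner `v_i`, `i ≠ j`, in its own class with `v_j ≤ M v_i`.

Write `v_j = r_j m_j²` with `r_j` squarefree. Every value taken by `r` is taken at least twice, so
`∑ ∏ v_j^{-σ}` is dominated by products of series `∑ n^{-2σ}` and converges for `σ > 1/2`. If
moreover some `v_j > y`, then `y^{2β} ≤ v_j^{2β} ≤ M^β ∏ v_t^β`, which buys a factor `y^{-2β}` at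
the price of `β` in the exponent. As the summands have size `∏ v_j^{-s+o(1)}`, here with `s = 3/4`,
`β` may be taken as close to `s - 1/2` as desired.
-/

open Filter Asymptotics Finset

section SquareRoots

variable {K L ι : Type*} [Field K] [Field L] [Algebra K L]

theorem trace_eq_zero_of_sq_eq_algebraMap [FiniteDimensional K L] {x : L} {a : K}
    (hx : x ^ 2 = algebraMap K L a) (ha : ¬IsSquare a) : Algebra.trace K L x = 0 := by
  have hirr : Irreducible (Polynomial.X ^ 2 - Polynomial.C a) :=
    X_pow_sub_C_irreducible_of_prime Nat.prime_two fun b hb => ha ⟨b, by rw [← hb, sq]⟩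
  have hminpoly : minpoly K x = Polynomial.X ^ 2 - Polynomial.C a :=
    (minpoly.eq_of_irreducible_of_monic hirr (by simp [hx])
      (Polynomial.monic_X_pow_sub_C a two_ne_zero)).symm
  have hnext : (minpoly K x).nextCoeff = 0 := by
    simp [hminpoly, Polynomial.nextCoeff, Polynomial.coeff_X_pow]
  rw [trace_eq_finrank_mul_minpoly_nextCoeff, hnext, neg_zero, mul_zero]

theorem mem_bot_of_sq_eq_algebraMap {x : L} {a : K}
    (hx : x ^ 2 = algebraMap K L a) (ha : IsSquare a) : x ∈ (⊥ : Subalgebra K L) := by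
  obtain ⟨b, rfl⟩ := ha
  rw [map_mul, ← sq] at hx
  rcases sq_eq_sq_iff_eq_or_eq_neg.mp hx with rfl | rfl
  · exact Subalgebra.algebraMap_mem _ b
  · exact neg_mem (Subalgebra.algebraMap_mem _ b)

variable [CharZero K] [Fintype ι] {e a : ι → K} {x : ι → L} [DecidablePred fun j => IsSquare (a j)]

theorem sum_isSquare_smul_eq_zero_of_finiteDimensional [FiniteDimensional K L]
    (hx : ∀ j, x j ^ 2 = algebraMap K L (a j)) (h : ∑ j, e j • x j = 0) :
    ∑ j with IsSquare (a j), e j • x j = 0 := by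
  have htrace : Algebra.trace K L (∑ j with IsSquare (a j), e j • x j) = 0 := by
    calc
      _ = Algebra.trace K L (∑ j, e j • x j) := by
        simp only [map_sum, map_smul]
        refine sum_subset (filter_subset _ _) fun j _ hj => ?_
        rw [trace_eq_zero_of_sq_eq_algebraMap (hx j) (by simpa using hj), smul_zero]
      _ = 0 := by rw [h, map_zero]
  have hbot : ∑ j with IsSquare (a j), e j • x j ∈ (⊥ : Subalgebra K L) :=
    sum_mem fun j hj => Subalgebra.smul_mem _
      (mem_bot_of_sq_eq_algebraMap (hx j) (mem_filter.mp hj).2) _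
  obtain ⟨c, hc⟩ := Algebra.mem_bot.mp hbot
  rw [← hc, Algebra.trace_algebraMap, smul_eq_zero] at htrace
  rw [← hc, htrace.resolve_left Module.finrank_pos.ne', map_zero]

theorem sum_isSquare_smul_eq_zero (hx : ∀ j, x j ^ 2 = algebraMap K L (a j))
    (h : ∑ j, e j • x j = 0) : ∑ j with IsSquare (a j), e j • x j = 0 := by
  let F := IntermediateField.adjoin K (Set.range x)
  have : FiniteDimensional K F := by
    refine IntermediateField.finiteDimensional_adjoin ?_
    rintro _ ⟨j, rfl⟩
    exact .of_pow two_pos (hx j ▸ isIntegral_algebraMap)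
  let z : ι → F := fun j => ⟨x j, IntermediateField.subset_adjoin K _ ⟨j, rfl⟩⟩
  have hz : ∑ j with IsSquare (a j), e j • z j = 0 :=
    sum_isSquare_smul_eq_zero_of_finiteDimensional (fun j => Subtype.ext (hx j))
      (Subtype.ext (by simpa [z] using h))
  simpa [z] using congrArg (algebraMap F L) hz

end SquareRoots

section SqrtRelation

variable {ι : Type*} [Fintype ι]

theorem sum_isSquare_mul_sqrt_eq_zero {e : ι → ℚ} {n : ι → ℕ} {m : ℕ} (hm : m ≠ 0)
    (h : ∑ j, (e j : ℝ) * √(n j) = 0) :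
    ∑ j with IsSquare (n j * m), (e j : ℝ) * √(n j) = 0 := by
  have hsq : ∀ j, (√(n j) * √m) ^ 2 = algebraMap ℚ ℝ (n j * m : ℕ) := fun j => by
    simp [mul_pow]
  have hmul : ∑ j, e j • (√(n j) * √m) = 0 := by
    simp only [Rat.smul_def, ← mul_assoc, ← sum_mul, h, zero_mul]
  have hfilter := sum_isSquare_smul_eq_zero (a := fun j => ((n j * m : ℕ) : ℚ)) hsq hmul
  simp only [Rat.isSquare_natCast_iff, Rat.smul_def, ← mul_assoc, ← sum_mul] at hfilter
  exact (mul_eq_zero.mp hfilter).resolve_right (by positivity)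

theorem exists_ne_isSquare_mul_and_abs_mul_sqrt_le {e : ι → ℚ} {n : ι → ℕ} {j : ι}
    (he : e j ≠ 0) (hn : n j ≠ 0) (h : ∑ i, (e i : ℝ) * √(n i) = 0) :
    ∃ i ≠ j, IsSquare (n i * n j) ∧ |(e j : ℝ)| * √(n j) ≤ (∑ t, |(e t : ℝ)|) * √(n i) := by
  classical
  by_contra! hlt
  set S : ℝ := ∑ t, |(e t : ℝ)|
  set x : ℝ := |(e j : ℝ)| * √(n j)
  set E : Finset ι := {i | IsSquare (n i * n j)}
  have hj : j ∈ E := by simp [E]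
  have hx : 0 < x := by positivity
  have hsplit : (e j : ℝ) * √(n j) = -∑ i ∈ E.erase j, (e i : ℝ) * √(n i) :=
    eq_neg_of_add_eq_zero_left <|
      (add_sum_erase E _ hj).trans (sum_isSquare_mul_sqrt_eq_zero hn h)
  have hx_le : x ≤ ∑ i ∈ E.erase j, |(e i : ℝ)| * √(n i) := by
    calc
      x = |∑ i ∈ E.erase j, (e i : ℝ) * √(n i)| := by
        rw [← abs_neg, ← hsplit, abs_mul, abs_of_nonneg (Real.sqrt_nonneg _)]
      _ ≤ ∑ i ∈ E.erase j, |(e i : ℝ) * √(n i)| := abs_sum_le_sum_abs _ _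
      _ = ∑ i ∈ E.erase j, |(e i : ℝ)| * √(n i) := by
        simp only [abs_mul, abs_of_nonneg (Real.sqrt_nonneg _)]
  have hE_lt : ∑ i ∈ E.erase j, |(e i : ℝ)| < S :=
    sum_lt_sum_of_subset (subset_univ _) (mem_univ j) (notMem_erase j E) (by positivity)
      fun _ _ _ => abs_nonneg _
  have hS : 0 ≤ S := sum_nonneg fun _ _ => abs_nonneg _
  refine lt_irrefl (S * x) ?_
  calc
    S * x ≤ S * ∑ i ∈ E.erase j, |(e i : ℝ)| * √(n i) := mul_le_mul_of_nonneg_left hx_le hS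
    _ = ∑ i ∈ E.erase j, |(e i : ℝ)| * (S * √(n i)) := by
      rw [mul_sum]
      exact sum_congr rfl fun _ _ => mul_left_comm _ _ _
    _ ≤ ∑ i ∈ E.erase j, |(e i : ℝ)| * x := by
      gcongr with i hi
      simp only [E, mem_erase, mem_filter, mem_univ, true_and] at hi
      exact (hlt i hi.1 hi.2).le
    _ = (∑ i ∈ E.erase j, |(e i : ℝ)|) * x := (sum_mul _ _ _).symm
    _ < S * x := mul_lt_mul_of_pos_right hE_lt hx

/-- The tuples of positive integers satisfying the homogeneous linear relation `∑ e_j √n_j = 0`.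
Rational coefficients replace the signs `±1` that distinguish the two sides of the equation. -/
def sqrtRelation (e : ι → ℚ) : Set (ι → ℕ+) :=
  {v | ∑ j, (e j : ℝ) * √(v j : ℕ) = 0}

theorem exists_forall_mem_sqrtRelation_le {e : ι → ℚ} (he : ∀ j, e j ≠ 0) :
    ∃ M : ℝ, 0 ≤ M ∧ ∀ v ∈ sqrtRelation e, ∀ j, ∃ i ≠ j,
      IsSquare ((v i : ℕ) * v j) ∧ ((v j : ℕ) : ℝ) ≤ M * (v i : ℕ) := by
  set S : ℝ := ∑ t, |(e t : ℝ)|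
  refine ⟨∑ j, (S / |(e j : ℝ)|) ^ 2, by positivity, fun v hv j => ?_⟩
  obtain ⟨i, hij, hsq, hle⟩ :=
    exists_ne_isSquare_mul_and_abs_mul_sqrt_le (he j) (v j).ne_zero hv
  have hej : 0 < |(e j : ℝ)| := abs_pos.mpr (Rat.cast_ne_zero.mpr (he j))
  have hsqrt : √(v j : ℕ) ≤ S / |(e j : ℝ)| * √(v i : ℕ) := by
    rw [div_mul_eq_mul_div, le_div_iff₀' hej]
    exact hle
  refine ⟨i, hij, hsq, ?_⟩
  calc
    ((v j : ℕ) : ℝ) = √(v j : ℕ) ^ 2 := (Real.sq_sqrt (Nat.cast_nonneg _)).symm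
    _ ≤ (S / |(e j : ℝ)| * √(v i : ℕ)) ^ 2 := by gcongr
    _ = (S / |(e j : ℝ)|) ^ 2 * (v i : ℕ) := by rw [mul_pow, Real.sq_sqrt (Nat.cast_nonneg _)]
    _ ≤ (∑ t, (S / |(e t : ℝ)|) ^ 2) * (v i : ℕ) := by
      gcongr
      exact single_le_sum (f := fun t => (S / |(e t : ℝ)|) ^ 2) (fun _ _ => sq_nonneg _)
        (mem_univ j)

end SqrtRelation

section DivisorBound

theorem natCast_add_one_le_max_mul_pow {u c : ℝ} (hu : 0 < u) (hc : 1 + u ≤ c) (a : ℕ) :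
    (a : ℝ) + 1 ≤ max 1 u⁻¹ * c ^ a := by
  have hu' : 1 ≤ max 1 u⁻¹ * u := by
    rw [← inv_mul_cancel₀ hu.ne']
    gcongr
    exact le_max_right _ _
  calc
    (a : ℝ) + 1 ≤ a * (max 1 u⁻¹ * u) + max 1 u⁻¹ :=
      add_le_add (le_mul_of_one_le_right a.cast_nonneg hu') (le_max_left _ _)
    _ = max 1 u⁻¹ * (1 + a * u) := by ring
    _ ≤ max 1 u⁻¹ * (1 + u) ^ a := by
      gcongr
      exact one_add_mul_le_pow (by linarith) a
    _ ≤ max 1 u⁻¹ * c ^ a := by gcongr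

theorem exists_divfun_le_mul_rpow {δ : ℝ} (hδ : 0 < δ) :
    ∃ C : ℝ, ∀ n : ℕ, n ≠ 0 → (divfun n : ℝ) ≤ C * (n : ℝ) ^ δ := by
  set K : ℝ := max 1 ((2 : ℝ) ^ δ - 1)⁻¹
  have hK : 1 ≤ K := le_max_left _ _
  obtain ⟨P, hP⟩ := exists_nat_ge ((2 : ℝ) ^ δ⁻¹)
  have hprime : ∀ p a : ℕ, p.Prime →
      (a : ℝ) + 1 ≤ (if p < P then K else 1) * ((p : ℝ) ^ δ) ^ a := by
    intro p a hp
    split_ifs with hpP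
    · refine natCast_add_one_le_max_mul_pow (sub_pos.mpr (Real.one_lt_rpow one_lt_two hδ)) ?_ a
      rw [add_sub_cancel]
      gcongr
      exact_mod_cast hp.two_le
    · have htwo : (2 : ℝ) ≤ (p : ℝ) ^ δ := by
        rw [← Real.rpow_inv_le_iff_of_pos zero_le_two p.cast_nonneg hδ]
        exact hP.trans (mod_cast not_lt.mp hpP)
      simpa using natCast_add_one_le_max_mul_pow one_pos (by linarith) a
  refine ⟨K ^ P, fun n hn => ?_⟩
  have hsmall : ∏ p ∈ n.primeFactors, (if p < P then K else 1) ≤ K ^ P := by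
    rw [← prod_filter, prod_const]
    refine pow_le_pow_right₀ hK ((card_le_card fun p hp => ?_).trans_eq (card_range P))
    exact mem_range.mpr (mem_filter.mp hp).2
  have hrpow : ∏ p ∈ n.primeFactors, ((p : ℝ) ^ δ) ^ n.factorization p = (n : ℝ) ^ δ := by
    conv_rhs => rw [← Nat.prod_factorization_pow_eq_self hn, Finsupp.prod]
    push_cast
    rw [← Real.finsetProd_rpow _ _ fun p _ => by positivity]
    exact prod_congr rfl fun p _ => (Real.rpow_pow_comm p.cast_nonneg _ _)
  calc
    (divfun n : ℝ) = ∏ p ∈ n.primeFactors, ((n.factorization p : ℝ) + 1) := by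
      rw [divfun, Nat.card_divisors hn]
      push_cast
      rfl
    _ ≤ ∏ p ∈ n.primeFactors,
        (if p < P then K else 1) * ((p : ℝ) ^ δ) ^ n.factorization p := by
      gcongr with p hp
      exact hprime p _ (Nat.prime_of_mem_primeFactors hp)
    _ = (∏ p ∈ n.primeFactors, (if p < P then K else 1)) * (n : ℝ) ^ δ := by
      rw [prod_mul_distrib, hrpow]
    _ ≤ K ^ P * (n : ℝ) ^ δ := by gcongr

theorem divfun_isBigO_rpow {δ : ℝ} (hδ : 0 < δ) :
    (fun n : ℕ => (divfun n : ℝ)) =O[atTop] fun n : ℕ => (n : ℝ) ^ δ := by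
  obtain ⟨C, hC⟩ := exists_divfun_le_mul_rpow hδ
  refine .of_bound C ((eventually_ne_atTop 0).mono fun n hn => ?_)
  rw [Real.norm_natCast, Real.norm_of_nonneg (by positivity)]
  exact hC n hn

end DivisorBound

section PairedTuples

variable {ι : Type*} [Fintype ι]

theorem summable_prod_pi {κ : ι → Type*} {f : ∀ i, κ i → ℝ} (hf₀ : ∀ i a, 0 ≤ f i a)
    (hf : ∀ i, Summable (f i)) : Summable fun u : ∀ i, κ i => ∏ i, f i (u i) := by
  classical
  refine summable_of_sum_le (fun u => prod_nonneg fun i _ => hf₀ i (u i))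
    (c := ∏ i, ∑' a, f i a) fun s => ?_
  have hs : s ⊆ Fintype.piFinset fun i => s.image fun u => u i := fun u hu =>
    Fintype.mem_piFinset.mpr fun i => mem_image_of_mem _ hu
  calc
    ∑ u ∈ s, ∏ i, f i (u i)
      ≤ ∑ u ∈ Fintype.piFinset fun i => s.image fun u => u i, ∏ i, f i (u i) :=
        sum_le_sum_of_subset_of_nonneg hs fun u _ _ => prod_nonneg fun i _ => hf₀ i (u i)
    _ = ∏ i, ∑ a ∈ s.image fun u => u i, f i a := (prod_univ_sum _ _).symm
    _ ≤ ∏ i, ∑' a, f i a := by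
      gcongr with i
      · exact fun i _ => sum_nonneg fun a _ => hf₀ i a
      · exact (hf i).sum_le_tsum _ fun a _ => hf₀ i a

theorem prod_comp_le_prod_sq {κ : Type*} [Fintype κ] {π : ι → κ} {g : κ → ℝ}
    (hπ : ∀ q, ∃ i j, i ≠ j ∧ π i = q ∧ π j = q) (hg₀ : ∀ q, 0 ≤ g q) (hg₁ : ∀ q, g q ≤ 1) :
    ∏ j, g (π j) ≤ ∏ q, g q ^ 2 := by
  classical
  rw [← prod_fiberwise' univ π g]
  gcongr with q
  · exact fun q _ => prod_nonneg fun _ _ => hg₀ q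
  obtain ⟨i, j, hij, hi, hj⟩ := hπ q
  rw [prod_const]
  refine pow_le_pow_of_le_one (hg₀ q) (hg₁ q) ?_
  rw [← card_pair hij]
  exact card_le_card (by simp [insert_subset_iff, hi, hj])

theorem summable_prod_of_forall_exists_ne_eq {α : Type*} {g : α → ℝ} (hg₀ : ∀ a, 0 ≤ g a)
    (hg₁ : ∀ a, g a ≤ 1) (hg : Summable fun a => g a ^ 2) :
    Summable fun r : {r : ι → α | ∀ j, ∃ i ≠ j, r i = r j} => ∏ j, g (r.1 j) := by
  classical
  have : Finite (Setoid ι) :=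
    .of_injective (fun s : Setoid ι => s.r) fun s t h => Setoid.ext fun a b => by
      exact iff_of_eq (congrFun₂ h a b)
  -- A tuple is encoded by the partition of `ι` into its fibres and its value on each fibre; there
  -- are finitely many partitions.
  let h : (Σ s : Setoid ι, Quotient s → α) → ℝ := fun x => ∏ q, g (x.2 q) ^ 2
  have hh₀ : ∀ x, 0 ≤ h x := fun x => prod_nonneg fun q _ => sq_nonneg _
  have hh : Summable h :=
    (summable_sigma_of_nonneg hh₀).mpr
      ⟨fun s => summable_prod_pi (f := fun (_ : Quotient s) a => g a ^ 2)
        (fun _ _ => sq_nonneg _) fun _ => hg, .of_finite⟩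
  let φ : {r : ι → α | ∀ j, ∃ i ≠ j, r i = r j} → Σ s : Setoid ι, Quotient s → α :=
    fun r => ⟨Setoid.ker r.1, Setoid.kerLift r.1⟩
  have hφ : Function.Injective φ := fun r r' hr => Subtype.ext <|
    congrArg (fun (x : Σ s : Setoid ι, Quotient s → α) j => x.2 (Quotient.mk x.1 j)) hr
  refine .of_nonneg_of_le (fun r => prod_nonneg fun j _ => hg₀ _) (fun r => ?_)
    (hh.comp_injective hφ)
  refine prod_comp_le_prod_sq (π := Quotient.mk (Setoid.ker r.1))
    (g := fun q => g (Setoid.kerLift r.1 q)) (fun q => ?_) (fun _ => hg₀ _) fun _ => hg₁ _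
  induction q using Quotient.inductionOn with
  | h j =>
    obtain ⟨i, hij, hi⟩ := r.2 j
    exact ⟨i, j, hij, Quotient.sound hi, rfl⟩

theorem eq_of_squarefree_of_isSquare_mul {a b : ℕ} (ha : Squarefree a) (hb : Squarefree b)
    (h : IsSquare (a * b)) : a = b := by
  have dvd_of_isSquare : ∀ {a b : ℕ}, Squarefree a → IsSquare (a * b) → a ∣ b := by
    rintro a b ha ⟨t, ht⟩
    have hat : a ∣ t := by
      rw [← ha.dvd_pow_iff_dvd two_ne_zero, sq, ← ht]
      exact dvd_mul_right a b
    obtain ⟨s, rfl⟩ := hat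
    exact ⟨s * s, Nat.eq_of_mul_eq_mul_left (Nat.pos_of_ne_zero ha.ne_zero) (by rw [ht]; ring)⟩
  exact Nat.dvd_antisymm (dvd_of_isSquare ha h) (dvd_of_isSquare hb (mul_comm a b ▸ h))

theorem exists_eq_mul_sq_and_eq_of_isSquare_mul :
    ∃ r m : ℕ+ → ℕ+, (∀ n, n = r n * m n ^ 2) ∧
      ∀ a b : ℕ+, IsSquare ((a : ℕ) * b) → r a = r b := by
  have hdecomp : ∀ n : ℕ+, ∃ r m : ℕ+, n = r * m ^ 2 ∧ Squarefree (r : ℕ) := fun n => by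
    obtain ⟨r, m, hr, hm, hn, hsf⟩ := Nat.sq_mul_squarefree_of_pos n.pos
    exact ⟨⟨r, hr⟩, ⟨m, hm⟩, PNat.eq (by rw [← hn, mul_comm]; rfl), hsf⟩
  choose r m hn hsf using hdecomp
  refine ⟨r, m, hn, fun a b hab => PNat.coe_injective ?_⟩
  refine eq_of_squarefree_of_isSquare_mul (hsf a) (hsf b) ?_
  have hcast : ∀ n : ℕ+, ((r n : ℕ) : ℚ) = (n : ℕ) / (m n : ℕ) ^ 2 := fun n => by
    rw [eq_div_iff (by positivity)]
    exact_mod_cast congrArg PNat.val (hn n).symm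
  rw [← Rat.isSquare_natCast_iff] at hab ⊢
  push_cast at hab ⊢
  rw [hcast, hcast, div_mul_div_comm, ← mul_pow]
  exact hab.div (.sq _)

theorem summable_pnat_rpow {p : ℝ} (hp : 1 < p) : Summable fun n : ℕ+ => ((n : ℕ) : ℝ) ^ (-p) :=
  (Real.summable_nat_rpow.mpr (by linarith)).comp_injective PNat.coe_injective

theorem summable_prod_rpow_of_forall_exists_ne_isSquare_mul {σ : ℝ} (hσ : 1 / 2 < σ) :
    Summable fun v : {v : ι → ℕ+ | ∀ j, ∃ i ≠ j, IsSquare ((v i : ℕ) * v j)} =>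
      ∏ j, ((v.1 j : ℕ) : ℝ) ^ (-σ) := by
  obtain ⟨r, m, hrm, hr⟩ := exists_eq_mul_sq_and_eq_of_isSquare_mul
  have hone : ∀ n : ℕ+, (1 : ℝ) ≤ (n : ℕ) := fun n => mod_cast n.pos
  have hpow : ∀ n : ℕ+, (((n : ℕ) : ℝ) ^ (-σ)) ^ 2 = ((n : ℕ) : ℝ) ^ (-(2 * σ)) := fun n => by
    rw [← Real.rpow_mul_natCast (Nat.cast_nonneg _)]
    ring_nf
  have hsq : Summable fun n : ℕ+ => (((n : ℕ) : ℝ) ^ (-σ)) ^ 2 := by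
    simp only [hpow]
    exact summable_pnat_rpow (by linarith)
  have hkernel : Summable fun r : {r : ι → ℕ+ | ∀ j, ∃ i ≠ j, r i = r j} =>
      ∏ j, ((r.1 j : ℕ) : ℝ) ^ (-σ) :=
    summable_prod_of_forall_exists_ne_eq (g := fun n : ℕ+ => ((n : ℕ) : ℝ) ^ (-σ))
      (fun n => by positivity)
      (fun n => Real.rpow_le_one_of_one_le_of_nonpos (hone n) (by linarith)) hsq
  have hroot : Summable fun u : ι → ℕ+ => ∏ j, (((u j : ℕ) : ℝ) ^ (-σ)) ^ 2 :=
    summable_prod_pi (f := fun (_ : ι) (n : ℕ+) => (((n : ℕ) : ℝ) ^ (-σ)) ^ 2)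
      (fun _ _ => sq_nonneg _) fun _ => hsq
  let φ : {v : ι → ℕ+ | ∀ j, ∃ i ≠ j, IsSquare ((v i : ℕ) * v j)} →
      {r : ι → ℕ+ | ∀ j, ∃ i ≠ j, r i = r j} × (ι → ℕ+) := fun v =>
    (⟨fun j => r (v.1 j), fun j => (v.2 j).imp fun _ hi => ⟨hi.1, hr _ _ hi.2⟩⟩,
      fun j => m (v.1 j))
  have hφ : Function.Injective φ := fun v w hvw => Subtype.ext <| funext fun j => by
    rw [hrm (v.1 j), hrm (w.1 j)]
    exact congrArg₂ (· * · ^ 2) (congrFun (congrArg (·.1.1) hvw) j)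
      (congrFun (congrArg (·.2) hvw) j)
  refine ((hkernel.mul_of_nonneg hroot (fun _ => by positivity)
    fun _ => by positivity).comp_injective hφ).congr fun v => ?_
  simp only [φ, Function.comp_apply, ← prod_mul_distrib]
  refine prod_congr rfl fun j _ => ?_
  conv_rhs => rw [hrm (v.1 j)]
  push_cast
  rw [Real.mul_rpow (by positivity) (by positivity), Real.rpow_pow_comm (by positivity)]

end PairedTuples

section Truncation

variable {ι : Type*} [Fintype ι]

/-- The summand `f(n₁)⋯f(n_k)/(n₁⋯n_k)^s`, for a general weight `f` and exponent `s` in place of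
the divisor function and `3/4`. -/
noncomputable def tupleTerm (f : ℕ → ℝ) (s : ℝ) (v : ι → ℕ+) : ℝ :=
  (∏ j, f (v j)) / (∏ j, ((v j : ℕ) : ℝ)) ^ s

theorem exists_abs_tupleTerm_le {f : ℕ → ℝ} {δ s σ : ℝ}
    (hf : f =O[atTop] fun n : ℕ => (n : ℝ) ^ δ) (hσ : σ + δ ≤ s) :
    ∃ C : ℝ, 0 ≤ C ∧ ∀ v : ι → ℕ+, |tupleTerm f s v| ≤ C * ∏ j, ((v j : ℕ) : ℝ) ^ (-σ) := by
  obtain ⟨D, hD, hfD⟩ := bound_of_isBigO_nat_atTop hf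
  refine ⟨D ^ Fintype.card ι, by positivity, fun v => ?_⟩
  have hfactor : ∀ n : ℕ+, |f n / ((n : ℕ) : ℝ) ^ s| ≤ D * ((n : ℕ) : ℝ) ^ (-σ) := fun n => by
    have hn : (0 : ℝ) < (n : ℕ) := mod_cast n.pos
    have hfn : |f n| ≤ D * ((n : ℕ) : ℝ) ^ δ := by
      simpa only [Real.norm_eq_abs, Real.abs_rpow_of_nonneg hn.le, abs_of_pos hn]
        using hfD (Real.rpow_pos_of_pos hn δ).ne'
    rw [abs_div, abs_of_pos (Real.rpow_pos_of_pos hn s), div_le_iff₀ (by positivity), mul_assoc,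
      ← Real.rpow_add hn]
    refine hfn.trans ?_
    gcongr
    · exact mod_cast n.pos
    · linarith
  calc
    |tupleTerm f s v| = ∏ j, |f (v j) / ((v j : ℕ) : ℝ) ^ s| := by
      rw [tupleTerm, ← Real.finsetProd_rpow _ _ fun j _ => Nat.cast_nonneg _, ← prod_div_distrib,
        abs_prod]
    _ ≤ ∏ j, D * ((v j : ℕ) : ℝ) ^ (-σ) := by
      gcongr with j
      exact hfactor (v j)
    _ = D ^ Fintype.card ι * ∏ j, ((v j : ℕ) : ℝ) ^ (-σ) := by
      rw [prod_mul_distrib, prod_const, card_univ]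

theorem rpow_two_mul_le_mul_prod_rpow {x : ι → ℝ} {M β : ℝ} {i j : ι} (hx : ∀ t, 1 ≤ x t)
    (hM : 0 ≤ M) (hβ : 0 ≤ β) (hij : i ≠ j) (hle : x j ≤ M * x i) :
    x j ^ (2 * β) ≤ M ^ β * ∏ t, x t ^ β := by
  classical
  have hx₀ : ∀ t, 0 < x t := fun t => one_pos.trans_le (hx t)
  have hpair : x i ^ β * x j ^ β ≤ ∏ t, x t ^ β := by
    rw [← prod_pair (f := fun t => x t ^ β) hij]
    exact prod_le_prod_of_subset_of_one_le (subset_univ _)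
      (fun t _ => Real.rpow_nonneg (hx₀ t).le β) fun t _ _ => Real.one_le_rpow (hx t) hβ
  calc
    x j ^ (2 * β) = x j ^ β * x j ^ β := by rw [two_mul, Real.rpow_add (hx₀ j)]
    _ ≤ (M * x i) ^ β * x j ^ β := by
      gcongr
      · exact Real.rpow_nonneg (hx₀ j).le β
      · exact (hx₀ j).le
    _ = M ^ β * (x i ^ β * x j ^ β) := by rw [Real.mul_rpow hM (hx₀ i).le, mul_assoc]
    _ ≤ M ^ β * ∏ t, x t ^ β := by gcongr

theorem exists_abs_tupleTerm_le_mul_rpow {f : ℕ → ℝ} {δ s σ β M : ℝ}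
    (hf : f =O[atTop] fun n : ℕ => (n : ℝ) ^ δ) (hβ : 0 ≤ β) (hσ : σ + β + δ ≤ s) (hM : 0 ≤ M) :
    ∃ C : ℝ, 0 ≤ C ∧ ∀ (v : ι → ℕ+) (i j : ι), i ≠ j → ((v j : ℕ) : ℝ) ≤ M * (v i : ℕ) →
      ∀ y : ℝ, 0 < y → y ≤ (v j : ℕ) →
        |tupleTerm f s v| ≤ C * y ^ (-(2 * β)) * ∏ t, ((v t : ℕ) : ℝ) ^ (-σ) := by
  obtain ⟨C, hC, hterm⟩ := exists_abs_tupleTerm_le (ι := ι) hf hσ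
  refine ⟨C * M ^ β, by positivity, fun v i j hij hle y hy hyj => ?_⟩
  have hone : ∀ t, (1 : ℝ) ≤ (v t : ℕ) := fun t => mod_cast (v t).pos
  have hy_le : y ^ (2 * β) ≤ M ^ β * ∏ t, ((v t : ℕ) : ℝ) ^ β :=
    (Real.rpow_le_rpow hy.le hyj (by positivity)).trans
      (rpow_two_mul_le_mul_prod_rpow hone hM hβ hij hle)
  calc
    |tupleTerm f s v| = y ^ (-(2 * β)) * y ^ (2 * β) * |tupleTerm f s v| := by
      rw [← Real.rpow_add hy, neg_add_cancel, Real.rpow_zero, one_mul]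
    _ ≤ y ^ (-(2 * β)) * (M ^ β * ∏ t, ((v t : ℕ) : ℝ) ^ β) *
        (C * ∏ t, ((v t : ℕ) : ℝ) ^ (-(σ + β))) := by
      gcongr
      exact hterm v
    _ = C * M ^ β * y ^ (-(2 * β)) *
        ∏ t, ((v t : ℕ) : ℝ) ^ β * ((v t : ℕ) : ℝ) ^ (-(σ + β)) := by
      rw [prod_mul_distrib]
      ring
    _ = C * M ^ β * y ^ (-(2 * β)) * ∏ t, ((v t : ℕ) : ℝ) ^ (-σ) := by
      congr 1
      refine prod_congr rfl fun t _ => ?_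
      rw [← Real.rpow_add (one_pos.trans_le (hone t))]
      ring_nf

theorem abs_tsum_subtype_sub_tsum_subtype_le {α : Type*} {A B : Set α} {F G : α → ℝ}
    (hBA : B ⊆ A) (hF : Summable fun a : A => F a) (hG : Summable fun a : A => G a)
    (hG₀ : ∀ a ∈ A, 0 ≤ G a) (hFG : ∀ a ∈ A \ B, |F a| ≤ G a) :
    |∑' a : A, F a - ∑' a : B, F a| ≤ ∑' a : A, G a := by
  have hFA : Summable (A.indicator F) := summable_subtype_iff_indicator.mp hF
  have hFB : Summable (B.indicator F) :=
    summable_subtype_iff_indicator.mp (hF.comp_injective (Set.inclusion_injective hBA))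
  have hGA : Summable (A.indicator G) := summable_subtype_iff_indicator.mp hG
  rw [tsum_subtype A F, tsum_subtype B F, tsum_subtype A G, ← hFA.tsum_sub hFB]
  rw [← Real.norm_eq_abs]
  refine tsum_of_norm_bounded hGA.hasSum fun a => ?_
  by_cases haA : a ∈ A
  · by_cases haB : a ∈ B
    · simpa [haA, haB] using hG₀ a haA
    · simpa [haA, haB] using hFG a ⟨haA, haB⟩
  · simp [haA, mt (@hBA a) haA]

theorem summable_prod_rpow_sqrtRelation {e : ι → ℚ} (he : ∀ j, e j ≠ 0) {σ : ℝ}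
    (hσ : 1 / 2 < σ) :
    Summable fun v : sqrtRelation e => ∏ j, ((v.1 j : ℕ) : ℝ) ^ (-σ) := by
  obtain ⟨M, -, hdom⟩ := exists_forall_mem_sqrtRelation_le he
  have hsub : sqrtRelation e ⊆ {v | ∀ j, ∃ i ≠ j, IsSquare ((v i : ℕ) * v j)} :=
    fun v hv j => (hdom v hv j).imp fun _ hi => ⟨hi.1, hi.2.1⟩
  have hpaired := summable_prod_rpow_of_forall_exists_ne_isSquare_mul (ι := ι) hσ
  exact hpaired.comp_injective (i := Set.inclusion hsub) (Set.inclusion_injective hsub)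

theorem summable_tupleTerm_sqrtRelation {e : ι → ℚ} (he : ∀ j, e j ≠ 0) {f : ℕ → ℝ} {δ s : ℝ}
    (hf : f =O[atTop] fun n : ℕ => (n : ℝ) ^ δ) (hδ : 1 / 2 + δ < s) :
    Summable fun v : sqrtRelation e => tupleTerm f s v.1 := by
  obtain ⟨C, -, hterm⟩ := exists_abs_tupleTerm_le (ι := ι) (σ := s - δ) hf (by linarith)
  exact .of_norm_bounded ((summable_prod_rpow_sqrtRelation he (by linarith)).mul_left C)
    fun v => hterm v.1

theorem exists_abs_tsum_tupleTerm_sub_le {e : ι → ℚ} (he : ∀ j, e j ≠ 0) {f : ℕ → ℝ}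
    {δ s β : ℝ} (hf : f =O[atTop] fun n : ℕ => (n : ℝ) ^ δ) (hβ : 0 ≤ β)
    (hs : 1 / 2 + β + δ < s) :
    ∃ C : ℝ, 0 ≤ C ∧ ∀ y : ℝ, 0 < y →
      |∑' v : sqrtRelation e, tupleTerm f s v.1 -
        ∑' v : {v // v ∈ sqrtRelation e ∧ ∀ j, ((v j : ℕ) : ℝ) ≤ y}, tupleTerm f s v.1| ≤
          C * y ^ (-(2 * β)) := by
  let G : (ι → ℕ+) → ℝ := fun v => ∏ j, ((v j : ℕ) : ℝ) ^ (-(s - β - δ))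
  have hG₀ : ∀ v, 0 ≤ G v := fun v => prod_nonneg fun j _ => by positivity
  have hG : Summable fun v : sqrtRelation e => G v :=
    summable_prod_rpow_sqrtRelation he (by linarith)
  obtain ⟨M, hM, hdom⟩ := exists_forall_mem_sqrtRelation_le he
  obtain ⟨C, hC, htail⟩ := exists_abs_tupleTerm_le_mul_rpow (ι := ι) (s := s) (σ := s - β - δ)
    hf hβ (by linarith) hM
  refine ⟨C * ∑' v : sqrtRelation e, G v, mul_nonneg hC (tsum_nonneg fun v => hG₀ v),
    fun y hy => ?_⟩
  set c : ℝ := C * y ^ (-(2 * β))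
  have hc : 0 ≤ c := by positivity
  calc
    _ ≤ ∑' v : sqrtRelation e, c * G v := by
      refine abs_tsum_subtype_sub_tsum_subtype_le
        (B := {v | v ∈ sqrtRelation e ∧ ∀ j, ((v j : ℕ) : ℝ) ≤ y}) (G := fun v => c * G v)
        (fun v hv => hv.1) (summable_tupleTerm_sqrtRelation he hf (by linarith))
        (hG.mul_left c) (fun v _ => mul_nonneg hc (hG₀ v)) fun v hv => ?_
      obtain ⟨j, hj⟩ : ∃ j, y < (v j : ℕ) := by
        by_contra! h
        exact hv.2 ⟨hv.1, h⟩
      obtain ⟨i, hij, -, hle⟩ := hdom v hv.1 j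
      exact htail v i j hij hle y hy hj.le
    _ = C * (∑' v : sqrtRelation e, G v) * y ^ (-(2 * β)) := by
      rw [tsum_mul_left, mul_right_comm]

theorem skl_convergent_and_truncation_general {e : ι → ℚ} (he : ∀ j, e j ≠ 0) {f : ℕ → ℝ}
    (hf : ∀ δ : ℝ, 0 < δ → f =O[atTop] fun n : ℕ => (n : ℝ) ^ δ) {s : ℝ} (hs : 1 / 2 < s)
    {ε : ℝ} (hε : 0 < ε) :
    (Summable fun v : sqrtRelation e => tupleTerm f s v.1) ∧
      ∃ C : ℝ, 0 < C ∧ ∀ y : ℝ, 1 ≤ y →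
        |∑' v : sqrtRelation e, tupleTerm f s v.1 -
          ∑' v : {v // v ∈ sqrtRelation e ∧ ∀ j, ((v j : ℕ) : ℝ) ≤ y}, tupleTerm f s v.1| ≤
            C * y ^ (1 - 2 * s + ε) := by
  obtain ⟨δ, hδ, hδ_min⟩ := exists_between (show 0 < min (ε / 4) ((s - 1 / 2) / 2) by
    exact lt_min (by linarith) (by linarith))
  obtain ⟨hδε, hδs⟩ := lt_min_iff.mp hδ_min
  obtain ⟨C, hC, htail⟩ := exists_abs_tsum_tupleTerm_sub_le he (s := s)
    (β := s - 1 / 2 - 2 * δ) (hf δ hδ) (by linarith) (by linarith)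
  refine ⟨summable_tupleTerm_sqrtRelation he (hf δ hδ) (by linarith), C + 1, by positivity,
    fun y hy => (htail y (one_pos.trans_le hy)).trans ?_⟩
  gcongr <;> linarith

end Truncation

theorem sklCond_eq_mem_sqrtRelation (k l : ℕ) :
    sklCond k l = (· ∈ sqrtRelation fun j : Fin k => if (j : ℕ) < l then 1 else -1) := by
  ext v
  simp [sklCond, sqrtRelation, apply_ite (Rat.cast : ℚ → ℝ)]

theorem skl_convergent_and_truncation (k l : ℕ) (hk : 2 ≤ k) (hl : 1 ≤ l) (hlk : l < k)
    (ε : ℝ) (hε : 0 < ε) :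
    (Summable fun v : {v : Fin k → ℕ+ // sklCond k l v} => sklTerm k v.1) ∧
      ∃ C : ℝ, 0 < C ∧ ∀ y : ℝ, 1 < y →
        |skl k l - sklTrunc k l y| ≤ C * y ^ (-(1 : ℝ) / 2 + ε) := by
  obtain ⟨hsum, C, hC, htail⟩ := skl_convergent_and_truncation_general (s := 3 / 4)
    (e := fun j : Fin k => if (j : ℕ) < l then 1 else -1) (fun j => by split_ifs <;> norm_num)
    (fun _ => divfun_isBigO_rpow) (by norm_num) hε
  unfold skl sklTrunc
  rw [sklCond_eq_mem_sqrtRelation, show -(1 : ℝ) / 2 = 1 - 2 * (3 / 4) by norm_num]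
  exact ⟨hsum, C, hC, fun y hy => htail y hy.le⟩
end
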